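/- arXiv:1111.2961 — 4 statements merged into one kernel-verified Lean document; each statement's English description precedes it below -/
import Mathlib

section
/- Let 0<α<1, β > 0, and λ > 0. Then for every t > 0, ∫₀ᵗ τ^{α−1} E_{α,α}(−λ τ^α) (t−τ)^{β−1} E_{α,β}(−λ (t−τ)^α) dτ = (1/α)(E_{α,α+β−1}(−λ t^α) + (1−β) E_{α,α+β}(−λ t^α)) · t^{α+β−1}. -/
open MeasureTheory Set Filter

/-- The two-parameter Mittag-Leffler function `E_{α,β}(z) = ∑_{k≥0} z^k/Γ(αk+β)`. -/
noncomputable def ml (α β z : ℝ) : ℝ := ∑' k : ℕ, z ^ k / Real.Gamma (α * k + β)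

lemma aux_gamma_lower {s R : ℝ} (hs : 0 < s) (hR : 0 < R) :
    1 / Real.Gamma s ≤ Real.exp R * (Real.exp 1 / R) ^ s := by
  have h1 : R ^ s * Real.exp (-R) ≤ Real.Gamma (s + 1) := by
    rw [Real.Gamma_eq_integral (by linarith)]
    have hconv := Real.GammaIntegral_convergent (s := s + 1) (by linarith)
    have hsub : Ioi R ⊆ Ioi (0:ℝ) := Ioi_subset_Ioi hR.le
    calc R ^ s * Real.exp (-R) = ∫ x in Ioi R, R ^ s * Real.exp (-x) := by
          rw [integral_const_mul, integral_exp_neg_Ioi]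
      _ ≤ ∫ x in Ioi R, Real.exp (-x) * x ^ (s + 1 - 1) := by
          apply setIntegral_mono_on
          · exact (integrableOn_exp_neg_Ioi R).const_mul _
          · exact hconv.mono_set hsub
          · exact measurableSet_Ioi
          · intro x hx
            have hx' : R < x := hx
            rw [add_sub_cancel_right, mul_comm]
            gcongr
      _ ≤ _ := by
          apply setIntegral_mono_set hconv
          · filter_upwards [ae_restrict_mem measurableSet_Ioi] with x hx
            have hx' : 0 < x := hx
            simp only [Pi.zero_apply]
            positivity
          · exact hsub.eventuallyLE
  have hG := Real.Gamma_pos_of_pos hs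
  rw [Real.Gamma_add_one hs.ne'] at h1
  have h2 : s ≤ Real.exp s := by linarith [Real.add_one_le_exp s]
  have h3 : R ^ s * Real.exp (-R) ≤ Real.exp s * Real.Gamma s :=
    h1.trans (by gcongr)
  rw [div_le_iff₀ hG, Real.div_rpow (Real.exp_pos 1).le hR.le, ← Real.exp_mul, one_mul]
  have hRs : 0 < R ^ s := Real.rpow_pos_of_pos hR s
  have : Real.exp R * (Real.exp s / R ^ s) * Real.Gamma s
      = (Real.exp s * Real.Gamma s) * Real.exp R / R ^ s := by ring
  rw [this, le_div_iff₀ hRs, one_mul]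
  calc R ^ s = (R ^ s * Real.exp (-R)) * Real.exp R := by
        rw [mul_assoc, ← Real.exp_add]; simp
    _ ≤ _ := by gcongr

lemma aux_geom (α b x : ℝ) (hα : 0 < α) (hb : 0 < b) :
    ∃ C : ℝ, 0 ≤ C ∧ ∀ k : ℕ, |x| ^ k / Real.Gamma (α * k + b) ≤ C * (1 / 2 : ℝ) ^ k := by
  set y : ℝ := 1 / (2 * (|x| + 1)) with hy
  have hy0 : 0 < y := by positivity
  set e : ℝ := y ^ (1 / α) with he
  have he0 : 0 < e := by positivity
  refine ⟨Real.exp (Real.exp 1 / e) * e ^ b, by positivity, fun k => ?_⟩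
  have hs : 0 < α * k + b := by positivity
  have h := aux_gamma_lower hs (div_pos (Real.exp_pos 1) he0)
  have h1 : Real.exp 1 / (Real.exp 1 / e) = e := by field_simp
  rw [h1, Real.rpow_add he0, Real.rpow_mul he0.le, Real.rpow_natCast, he,
    ← Real.rpow_mul hy0.le, one_div_mul_cancel hα.ne', Real.rpow_one, ← he] at h
  have h2 : |x| * y ≤ 1 / 2 := by
    rw [hy]
    have := abs_nonneg x
    rw [mul_one_div, div_le_div_iff₀ (by positivity) (by norm_num)]
    linarith
  calc |x| ^ k / Real.Gamma (α * k + b) = |x| ^ k * (1 / Real.Gamma (α * k + b)) := by ring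
    _ ≤ |x| ^ k * (Real.exp (Real.exp 1 / e) * (y ^ k * e ^ b)) := by gcongr
    _ = Real.exp (Real.exp 1 / e) * e ^ b * (|x| * y) ^ k := by rw [mul_pow]; ring
    _ ≤ _ := by gcongr

lemma aux_summable (α b x : ℝ) (hα : 0 < α) (hb : 0 < b) :
    Summable fun k : ℕ => ‖x ^ k / Real.Gamma (α * k + b)‖ := by
  obtain ⟨C, hC, h⟩ := aux_geom α b x hα hb
  refine Summable.of_nonneg_of_le (fun _ => norm_nonneg _) (fun k => ?_)
    ((summable_geometric_of_lt_one (by norm_num) (by norm_num : (1/2:ℝ) < 1)).mul_left C)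
  have hs : 0 < α * k + b := by positivity
  rw [norm_div, norm_pow, Real.norm_eq_abs, Real.norm_eq_abs,
    abs_of_pos (Real.Gamma_pos_of_pos hs)]
  exact h k

lemma aux_summable_prod (α b x : ℝ) (hα : 0 < α) (hb : 0 < b) :
    Summable fun p : ℕ × ℕ => ‖x ^ (p.1 + p.2) / Real.Gamma (α * ((p.1 + p.2 : ℕ) : ℝ) + b)‖ := by
  obtain ⟨C, hC, h⟩ := aux_geom α b x hα hb
  have hg := summable_geometric_of_lt_one (by norm_num) (by norm_num : (1/2:ℝ) < 1)
  have hg2 := (hg.mul_of_nonneg hg (fun k => by simp) (fun k => by simp)).mul_left C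
  refine Summable.of_nonneg_of_le (fun _ => norm_nonneg _) (fun p => ?_) hg2
  have hs : 0 < α * ((p.1 + p.2 : ℕ) : ℝ) + b := by positivity
  rw [norm_div, norm_pow, Real.norm_eq_abs, Real.norm_eq_abs,
    abs_of_pos (Real.Gamma_pos_of_pos hs), ← pow_add]
  exact h _

lemma aux_beta {u v t : ℝ} (hu : 0 < u) (hv : 0 < v) (ht : 0 < t) :
    ∫ τ in Ioo 0 t, τ ^ (u - 1) * (t - τ) ^ (v - 1)
      = t ^ (u + v - 1) * (Real.Gamma u * Real.Gamma v / Real.Gamma (u + v)) := by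
  have h := Complex.betaIntegral_scaled (u : ℂ) (v : ℂ) ht
  rw [Complex.betaIntegral_eq_Gamma_mul_div _ _ (by simpa) (by simpa)] at h
  apply Complex.ofReal_injective
  rw [← integral_Ioc_eq_integral_Ioo, ← intervalIntegral.integral_of_le ht.le,
    ← intervalIntegral.integral_ofReal]
  push_cast
  rw [← Complex.Gamma_ofReal, ← Complex.Gamma_ofReal, ← Complex.Gamma_ofReal,
    Complex.ofReal_cpow ht.le]
  push_cast
  rw [← h]
  apply intervalIntegral.integral_congr
  intro x hx
  rw [uIcc_of_le ht.le] at hx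
  simp only
  rw [Complex.ofReal_cpow hx.1, Complex.ofReal_cpow (sub_nonneg.2 hx.2)]
  push_cast
  rfl

lemma aux_beta_int {u v t : ℝ} (hu : 0 < u) (hv : 0 < v) (ht : 0 < t) :
    IntegrableOn (fun τ => τ ^ (u - 1) * (t - τ) ^ (v - 1)) (Ioo 0 t) := by
  apply Integrable.of_integral_ne_zero
  rw [aux_beta hu hv ht]
  have := Real.Gamma_pos_of_pos hu
  have := Real.Gamma_pos_of_pos hv
  have := Real.Gamma_pos_of_pos (add_pos hu hv)
  positivity

lemma aux_antidiag {g : ℕ → ℝ} {a : ℝ} (h : HasSum (fun p : ℕ × ℕ => g (p.1 + p.2)) a) :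
    HasSum (fun n : ℕ => ((n : ℝ) + 1) * g n) a := by
  have h' := (Finset.HasAntidiagonal.sigmaAntidiagonalEquivProd (A := ℕ)).hasSum_iff.2 h
  refine h'.sigma fun n => ?_
  have h2 := hasSum_fintype (fun c : Finset.HasAntidiagonal.antidiagonal n => g n)
  simp only [Finset.sum_const, Finset.card_univ, Fintype.card_coe,
    Finset.Nat.card_antidiagonal, nsmul_eq_mul, Nat.cast_add, Nat.cast_one] at h2
  convert h2 using 2 with c
  have hc := Finset.HasAntidiagonal.mem_antidiagonal.1 c.2
  simp only [Function.comp, Finset.HasAntidiagonal.sigmaAntidiagonalEquivProd_apply]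
  rw [hc]

/-- for `0<α<1`, `β>0`, `λ>0` and `t > 0`,
`∫₀ᵗ τ^{α−1} E_{α,α}(−λτ^α) (t−τ)^{β−1} E_{α,β}(−λ(t−τ)^α) dτ
  = (1/α)(E_{α,α+β−1}(−λt^α) + (1−β) E_{α,α+β}(−λt^α)) t^{α+β−1}`. -/
theorem mittagLeffler_convolution_eq (α β lam : ℝ)
    (hα : 0 < α) (hα1 : α < 1) (hβ : 0 < β) (hlam : 0 < lam) :
    ∀ t : ℝ, 0 < t →
      (∫ τ in (0:ℝ)..t, τ ^ (α - 1) * ml α α (-lam * τ ^ α) *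
          ((t - τ) ^ (β - 1) * ml α β (-lam * (t - τ) ^ α)))
        = (1 / α) * (ml α (α + β - 1) (-lam * t ^ α)
            + (1 - β) * ml α (α + β) (-lam * t ^ α)) * t ^ (α + β - 1) := by
  intro t ht
  set z : ℝ := -lam * t ^ α with hz
  let c : ℕ → ℝ := fun j => (-lam) ^ j / Real.Gamma (α * j + α)
  let d : ℕ → ℝ := fun k => (-lam) ^ k / Real.Gamma (α * k + β)
  let F : ℕ × ℕ → ℝ → ℝ := fun p τ => c p.1 * d p.2 *
    (τ ^ ((α * p.1 + α) - 1) * (t - τ) ^ ((α * p.2 + β) - 1))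
  let G : ℕ → ℝ := fun n => t ^ (α + β - 1) * (z ^ n / Real.Gamma (α * n + (α + β)))
  have hu : ∀ j : ℕ, 0 < α * j + α := fun j => by positivity
  have hv : ∀ j : ℕ, 0 < α * j + β := fun j => by positivity
  have hval : ∀ p : ℕ × ℕ, c p.1 * d p.2 * (t ^ ((α * p.1 + α) + (α * p.2 + β) - 1) *
      (Real.Gamma (α * p.1 + α) * Real.Gamma (α * p.2 + β) /
        Real.Gamma ((α * p.1 + α) + (α * p.2 + β)))) = G (p.1 + p.2) := by
    rintro ⟨j, k⟩
    have h1 := (Real.Gamma_pos_of_pos (hu j)).ne'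
    have h2 := (Real.Gamma_pos_of_pos (hv k)).ne'
    have e1 : (α * j + α) + (α * k + β) = α * ((j + k : ℕ) : ℝ) + (α + β) := by
      push_cast; ring
    have e2 : α * ((j + k : ℕ) : ℝ) + (α + β) - 1
      = α * ((j + k : ℕ) : ℝ) + (α + β - 1) := by ring
    simp only [c, d, G]
    rw [e1, e2, Real.rpow_add ht, Real.rpow_mul ht.le, Real.rpow_natCast, hz, mul_pow,
      pow_add (-lam)]
    field_simp
  have hFint : ∀ p, Integrable (F p) (volume.restrict (Ioo 0 t)) := fun p =>
    (aux_beta_int (hu p.1) (hv p.2) ht).const_mul _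
  have hFval : ∀ p, ∫ τ in Ioo 0 t, F p τ = G (p.1 + p.2) := by
    intro p
    simp only [F]
    rw [integral_const_mul, aux_beta (hu p.1) (hv p.2) ht, hval]
  have hFnorm : ∀ p, ∫ τ in Ioo 0 t, ‖F p τ‖ = ‖G (p.1 + p.2)‖ := by
    intro p
    have hB : ∀ τ ∈ Ioo 0 t,
        0 ≤ τ ^ ((α * p.1 + α) - 1) * (t - τ) ^ ((α * p.2 + β) - 1) := by
      rintro τ ⟨h0, h1⟩
      have h1' : 0 < t - τ := sub_pos.2 h1
      positivity
    have e : ∫ τ in Ioo 0 t, ‖F p τ‖ = ∫ τ in Ioo 0 t, ‖c p.1 * d p.2‖ *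
        (τ ^ ((α * p.1 + α) - 1) * (t - τ) ^ ((α * p.2 + β) - 1)) := by
      apply setIntegral_congr_fun measurableSet_Ioo
      intro τ hτ
      simp only [F]
      rw [norm_mul (c p.1 * d p.2), Real.norm_of_nonneg (hB τ hτ)]
    rw [e, ← hFval]
    simp only [F]
    rw [integral_const_mul, integral_const_mul, norm_mul (c p.1 * d p.2),
      Real.norm_of_nonneg (setIntegral_nonneg measurableSet_Ioo hB)]
  have hS : Summable fun p : ℕ × ℕ => ‖G (p.1 + p.2)‖ := by
    simp only [G, norm_mul (t ^ (α + β - 1))]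
    exact (aux_summable_prod α (α + β) z hα (by positivity)).mul_left _
  have hsum := hasSum_integral_of_summable_integral_norm hFint (by simpa only [hFnorm] using hS)
  simp only [hFval] at hsum
  have hLHS : (∫ τ in (0:ℝ)..t, τ ^ (α - 1) * ml α α (-lam * τ ^ α) *
          ((t - τ) ^ (β - 1) * ml α β (-lam * (t - τ) ^ α)))
      = ∫ τ in Ioo 0 t, ∑' p, F p τ := by
    rw [intervalIntegral.integral_of_le ht.le, integral_Ioc_eq_integral_Ioo]
    apply setIntegral_congr_fun measurableSet_Ioo
    rintro τ ⟨h0, h1⟩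
    have h1' : 0 < t - τ := sub_pos.2 h1
    have key : ∀ (s b : ℝ) (k : ℕ), 0 < s → s ^ (α * k + b - 1) = s ^ (b - 1) * (s ^ α) ^ k := by
      intro s b k hs
      rw [show α * k + b - 1 = (b - 1) + α * k by ring, Real.rpow_add hs, Real.rpow_mul hs.le,
        Real.rpow_natCast]
    simp only [ml]
    rw [mul_mul_mul_comm, tsum_mul_tsum_of_summable_norm (aux_summable _ _ _ hα hα)
      (aux_summable _ _ _ hα hβ), ← tsum_mul_left]
    congr 1
    funext p
    simp only [F, c, d]
    rw [key _ _ _ h0, key _ _ _ h1', mul_pow, mul_pow]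
    ring
  rw [hLHS, ← (aux_antidiag hsum).tsum_eq]
  have hA : Summable fun n : ℕ => ((n:ℝ) + 1) * G n := (aux_antidiag hsum).summable
  have hB : Summable fun n : ℕ => z ^ n / Real.Gamma (α * n + (α + β)) :=
    (aux_summable α (α + β) z hα (by positivity)).of_norm
  have hpt : ∀ n : ℕ, z ^ n / Real.Gamma (α * n + (α + β - 1))
      = (α * (t ^ (α + β - 1))⁻¹) * (((n:ℝ) + 1) * G n)
        - (1 - β) * (z ^ n / Real.Gamma (α * n + (α + β))) := by
    intro n
    have hT : t ^ (α + β - 1) ≠ 0 := (Real.rpow_pos_of_pos ht _).ne'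
    have hG : ∀ s : ℝ, 1 / Real.Gamma s = s / Real.Gamma (s + 1) := by
      intro s
      rcases eq_or_ne s 0 with rfl | hs
      · simp [Real.Gamma_zero]
      · rw [Real.Gamma_add_one hs, div_mul_eq_div_div, div_self hs]
    have := hG (α * n + (α + β - 1))
    rw [show α * (n:ℝ) + (α + β - 1) + 1 = α * n + (α + β) by ring] at this
    rw [div_eq_mul_one_div, this]
    simp only [G]
    have e : α * (t ^ (α + β - 1))⁻¹ *
        (((n:ℝ) + 1) * (t ^ (α + β - 1) * (z ^ n / Real.Gamma (α * n + (α + β)))))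
        = α * (((n:ℝ) + 1) * (z ^ n / Real.Gamma (α * n + (α + β)))) := by
      field_simp
    rw [e]
    ring
  have hT : t ^ (α + β - 1) ≠ 0 := (Real.rpow_pos_of_pos ht _).ne'
  simp only [ml]
  simp_rw [hpt]
  rw [(hA.mul_left _).tsum_sub (hB.mul_left _), tsum_mul_left, tsum_mul_left]
  field_simp
  ring
end

section
/- (Asymptotics of the solution, Theorem 7) Let 0<α<1, β > 0 and λ, μ > 0, and define φ(t) = ∫₀ᵗ τ^{α−1} E_{α,α}(−μ τ^α) (t−τ)^{β−1} E_{α,β}(−λ (t−τ)^α) dτ for t > 0. Then as t → +∞: if α ≠ β then φ(t) = O(t^{β−α−1}), and if α = β then φ(t) = O(t^{−α−1}). -/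
open MeasureTheory Set Filter Asymptotics

/-- lower bound for Gamma -/
lemma Gamma_lower (R y : ℝ) (hR : 1 ≤ R) (hy : 1 ≤ y) :
    R ^ (y - 1) * Real.exp (-(R + 1)) ≤ Real.Gamma y := by
  rw [Real.Gamma_eq_integral (by linarith)]
  have hint := Real.GammaIntegral_convergent (s := y) (by linarith)
  have h1 : ∫ x in Ioc R (R+1), R ^ (y - 1) * Real.exp (-(R + 1)) ≤
      ∫ x in Ioc R (R+1), Real.exp (-x) * x ^ (y - 1) := by
    apply setIntegral_mono_on
    · exact integrableOn_const (by simp)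
    · apply hint.mono_set
      intro x hx
      exact lt_of_lt_of_le (by linarith) hx.1.le
    · exact measurableSet_Ioc
    · intro x hx
      rw [mul_comm]
      apply mul_le_mul
      · apply Real.exp_le_exp.2; linarith [hx.2]
      · exact Real.rpow_le_rpow (by linarith) hx.1.le (by linarith)
      · positivity
      · positivity
  have h2 : ∫ x in Ioc R (R+1), Real.exp (-x) * x ^ (y - 1) ≤
      ∫ x in Ioi 0, Real.exp (-x) * x ^ (y - 1) := by
    apply setIntegral_mono_set hint
    · filter_upwards [ae_restrict_mem measurableSet_Ioi] with x hx
      have : (0:ℝ) < x := hx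
      simp only [Pi.zero_apply]
      positivity
    · apply Eventually.of_forall
      intro x hx
      exact lt_of_lt_of_le (by linarith) hx.1.le
  have h3 : ∫ x in Ioc R (R+1), R ^ (y - 1) * Real.exp (-(R + 1)) = R ^ (y - 1) * Real.exp (-(R + 1)) := by
    simp
  linarith

lemma hs_congr {f g : ℕ → ℝ} {a b : ℝ} (h : HasSum f a) (hf : ∀ k, g k = f k) (hab : b = a) :
    HasSum g b := by
  have : g = f := funext hf
  rw [this, hab]; exact h

lemma Gpos {α β : ℝ} (hα : 0 < α) (hβ : 0 < β) (k : ℕ) : 0 < Real.Gamma (α * k + β) :=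
  Real.Gamma_pos_of_pos (by positivity)

lemma ml_summable_abs {α β : ℝ} (hα : 0 < α) (hβ : 0 < β) (x : ℝ) (hx : 0 ≤ x) :
    Summable fun k : ℕ => x ^ k / Real.Gamma (α * k + β) := by
  obtain ⟨R, hR1, hR2⟩ : ∃ R : ℝ, 1 ≤ R ∧ 2 * x ≤ R ^ α := by
    have := (tendsto_rpow_atTop hα).eventually_ge_atTop (2 * x)
    obtain ⟨R, h1, h2⟩ := (this.and (eventually_ge_atTop 1)).exists
    exact ⟨R, h2, h1⟩
  have hR0 : 0 < R := by linarith
  have hg : Summable fun k : ℕ => (Real.exp (R + 1) * R ^ (1 - β)) * (1 / 2 : ℝ) ^ k :=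
    (summable_geometric_of_lt_one (by norm_num) (by norm_num)).mul_left _
  apply Summable.of_norm_bounded_eventually_nat hg
  have hev : ∀ᶠ k : ℕ in atTop, 1 ≤ α * k :=
    (tendsto_natCast_atTop_atTop.const_mul_atTop hα).eventually_ge_atTop 1
  filter_upwards [hev] with k hk
  have hG := Gamma_lower R (α * k + β) hR1 (by linarith)
  have hGp := Gpos hα hβ k
  rw [Real.norm_of_nonneg (by positivity), div_le_iff₀ hGp]
  have e1 : R ^ (α * k + β - 1) = (R ^ α) ^ k * (R ^ (1 - β))⁻¹ := by
    rw [← Real.rpow_neg hR0.le, ← Real.rpow_natCast, ← Real.rpow_mul hR0.le, ← Real.rpow_add hR0]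
    congr 1; ring
  rw [e1, Real.exp_neg] at hG
  calc x ^ k ≤ (1/2:ℝ)^k * (R ^ α) ^ k := by
        rw [← mul_pow]; exact pow_le_pow_left₀ hx (by linarith) k
    _ = (Real.exp (R + 1) * R ^ (1 - β)) * (1 / 2 : ℝ) ^ k *
      ((R ^ α) ^ k * (R ^ (1 - β))⁻¹ * (Real.exp (R + 1))⁻¹) := by
        have : R ^ (1 - β) ≠ 0 := by positivity
        field_simp
    _ ≤ _ := by gcongr

lemma ml_summable {α β : ℝ} (hα : 0 < α) (hβ : 0 < β) (x : ℝ) :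
    Summable fun k : ℕ => x ^ k / Real.Gamma (α * k + β) := by
  apply Summable.of_norm
  convert ml_summable_abs hα hβ |x| (abs_nonneg x) using 2 with k
  rw [norm_div, norm_pow, Real.norm_eq_abs, Real.norm_of_nonneg (Gpos hα hβ k).le]

lemma ml_continuous {α β : ℝ} (hα : 0 < α) (hβ : 0 < β) : Continuous (ml α β) := by
  rw [continuous_iff_continuousAt]
  intro x
  have h : ContinuousOn (ml α β) (Ioo (-(|x|+1)) (|x|+1)) := by
    unfold ml
    apply continuousOn_tsum (u := fun k : ℕ => (|x|+1) ^ k / Real.Gamma (α * k + β))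
    · intro k; fun_prop
    · exact ml_summable hα hβ _
    · intro k y hy
      rw [norm_div, norm_pow, Real.norm_eq_abs, Real.norm_of_nonneg (Gpos hα hβ k).le]
      have := Gpos hα hβ k
      have : |y| ≤ |x|+1 := abs_le.2 ⟨hy.1.le, hy.2.le⟩
      gcongr
  apply h.continuousAt
  apply Ioo_mem_nhds <;> cases abs_cases x <;> linarith

lemma ml_rec {α β : ℝ} (hα : 0 < α) (hβ : 0 < β) (z : ℝ) :
    ml α β z = 1 / Real.Gamma β + z * ml α (β + α) z := by
  unfold ml
  rw [(ml_summable hα hβ z).tsum_eq_zero_add, ← tsum_mul_left]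
  simp only [pow_zero, Nat.cast_zero, mul_zero, zero_add]
  congr 1
  apply tsum_congr
  intro k
  rw [pow_succ]
  push_cast
  rw [show α * (k + 1 : ℝ) + β = α * k + (β + α) by ring]
  ring

/-- `g(t) = t^{β-1} E_{α,β}(-l t^α)` -/
noncomputable def gg (α β l t : ℝ) : ℝ := t ^ (β - 1) * ml α β (-l * t ^ α)

lemma mlc {α β : ℝ} (hα : 0 < α) (hβ : 0 < β) (l : ℝ) :
    Continuous fun t : ℝ => ml α β (-l * t ^ α) :=
  (ml_continuous hα hβ).comp (continuous_const.mul (Real.continuous_rpow_const hα.le))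

lemma gg_rec {α β : ℝ} (hα : 0 < α) (hβ : 0 < β) (l t : ℝ) (ht : 0 < t) :
    gg α β l t = t ^ (β - 1) / Real.Gamma β - l * gg α (β + α) l t := by
  unfold gg
  rw [ml_rec hα hβ, show β + α - 1 = (β - 1) + α by ring, Real.rpow_add ht]
  ring

lemma gg_hasSum {α β : ℝ} (hα : 0 < α) (hβ : 0 < β) (l t : ℝ) (ht : 0 < t) :
    HasSum (fun k : ℕ => (-l) ^ k / Real.Gamma (α * k + β) * t ^ (α * k + β - 1)) (gg α β l t) := by
  have := ((ml_summable hα hβ (-l * t ^ α)).hasSum).mul_left (t ^ (β - 1))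
  unfold gg ml
  refine hs_congr this (fun k => ?_) rfl
  rw [show α * k + β - 1 = α * k + (β - 1) by ring, Real.rpow_add ht, Real.rpow_mul ht.le, mul_pow,
    Real.rpow_natCast]
  ring

lemma beta_real {a b t : ℝ} (ha : 0 < a) (hb : 0 < b) (ht : 0 < t) :
    ∫ s in (0:ℝ)..t, s ^ (a - 1) * (t - s) ^ (b - 1) =
      t ^ (a + b - 1) * (Real.Gamma a * Real.Gamma b / Real.Gamma (a + b)) := by
  have h := Complex.betaIntegral_scaled (a : ℂ) (b : ℂ) ht
  have h2 := Complex.Gamma_mul_Gamma_eq_betaIntegral (s := (a:ℂ)) (t := (b:ℂ)) (by simpa) (by simpa)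
  have h3 : Complex.betaIntegral (a : ℂ) (b : ℂ) =
      ((Real.Gamma a * Real.Gamma b / Real.Gamma (a + b) : ℝ) : ℂ) := by
    have : (Real.Gamma (a + b) : ℂ) ≠ 0 := by
      exact_mod_cast (Real.Gamma_pos_of_pos (by linarith : 0 < a + b)).ne'
    push_cast
    rw [eq_div_iff this, ← Complex.Gamma_ofReal, ← Complex.Gamma_ofReal, ← Complex.Gamma_ofReal, h2]
    push_cast; ring
  rw [h3] at h
  have h4 : ∫ x in (0:ℝ)..t, (x:ℂ) ^ ((a:ℂ) - 1) * ((t:ℂ) - x) ^ ((b:ℂ) - 1) =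
      ((∫ s in (0:ℝ)..t, s ^ (a - 1) * (t - s) ^ (b - 1) : ℝ) : ℂ) := by
    rw [← intervalIntegral.integral_ofReal]
    apply intervalIntegral.integral_congr
    intro x hx
    rw [uIcc_of_le ht.le] at hx
    simp only
    push_cast
    rw [Complex.ofReal_cpow hx.1, Complex.ofReal_cpow (by linarith [hx.2])]
    push_cast; rfl
  rw [h4] at h
  apply Complex.ofReal_injective
  rw [h]
  push_cast
  rw [Complex.ofReal_cpow ht.le]
  push_cast; rfl

lemma beta_int {a b t : ℝ} (ha : 0 < a) (hb : 0 < b) (ht : 0 < t) :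
    IntervalIntegrable (fun s => s ^ (a - 1) * (t - s) ^ (b - 1)) volume 0 t := by
  by_contra h
  have h1 := intervalIntegral.integral_undef h
  rw [beta_real ha hb ht] at h1
  have := Real.Gamma_pos_of_pos ha
  have := Real.Gamma_pos_of_pos hb
  have := Real.Gamma_pos_of_pos (by linarith : 0 < a + b)
  have : 0 < t ^ (a + b - 1) * (Real.Gamma a * Real.Gamma b / Real.Gamma (a + b)) := by positivity
  linarith

lemma conv_hasSum {α β : ℝ} (hα : 0 < α) (hβ : 0 < β) (l t : ℝ) (ht : 0 < t) (G : ℝ → ℝ)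
    (hG : IntervalIntegrable (fun s => s ^ (β - 1) * G s) volume 0 t) :
    HasSum (fun k : ℕ => (-l) ^ k / Real.Gamma (α * k + β) *
        ∫ s in (0:ℝ)..t, s ^ (α * k + β - 1) * G s)
      (∫ s in (0:ℝ)..t, gg α β l s * G s) := by
  have hpt : ∀ k : ℕ, ∀ s ∈ Ioc 0 t, s ^ (α * k + β - 1) * G s =
      s ^ (α * k) * (s ^ (β - 1) * G s) := by
    intro k s hs
    rw [show α * k + β - 1 = α * k + (β - 1) by ring, Real.rpow_add hs.1]; ring
  have hcont : ∀ k : ℕ, Continuous fun s : ℝ => s ^ (α * k) := fun k =>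
    Real.continuous_rpow_const (by positivity)
  have hint : ∀ k : ℕ, IntegrableOn (fun s => s ^ (α * k) * (s ^ (β - 1) * G s)) (Ioc 0 t) := by
    intro k
    have := hG.continuousOn_mul (hcont k).continuousOn
    exact (intervalIntegrable_iff_integrableOn_Ioc_of_le ht.le).1 this
  have hG' := (intervalIntegrable_iff_integrableOn_Ioc_of_le ht.le).1 hG
  have key := hasSum_integral_of_summable_integral_norm (μ := volume.restrict (Ioc 0 t))
    (F := fun (k : ℕ) s => (-l) ^ k / Real.Gamma (α * k + β) * (s ^ (α * k) * (s ^ (β - 1) * G s)))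
    (fun k => (hint k).const_mul _) ?_
  · refine hs_congr key (fun k => ?_) ?_
    · rw [integral_const_mul, intervalIntegral.integral_of_le ht.le]
      congr 1
      exact setIntegral_congr_fun measurableSet_Ioc (hpt k)
    · rw [intervalIntegral.integral_of_le ht.le]
      apply setIntegral_congr_fun measurableSet_Ioc
      intro s hs
      have := (gg_hasSum hα hβ l s hs.1).mul_right (G s)
      simp only
      rw [← this.tsum_eq]
      apply tsum_congr
      intro k
      rw [mul_assoc, hpt k s hs]
  · have hs := (ml_summable hα hβ (|l| * t ^ α)).mul_right (∫ s in Ioc 0 t, ‖s ^ (β - 1) * G s‖)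
    apply Summable.of_nonneg_of_le (fun k => integral_nonneg fun s => norm_nonneg _) _ hs
    intro k
    rw [← integral_const_mul]
    apply setIntegral_mono_on ((hint k).const_mul _).norm (hG'.norm.const_mul _) measurableSet_Ioc
    intro s hs
    have hg := Gpos hα hβ k
    rw [norm_mul, norm_mul, norm_div, norm_pow, norm_neg, Real.norm_of_nonneg hg.le, mul_pow,
      Real.norm_eq_abs l, Real.norm_of_nonneg (Real.rpow_nonneg hs.1.le (α * k)), ← mul_assoc]
    apply mul_le_mul_of_nonneg_right _ (norm_nonneg _)
    have : s ^ (α * k) ≤ (t ^ α) ^ k := by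
      rw [← Real.rpow_natCast, ← Real.rpow_mul ht.le]
      exact Real.rpow_le_rpow hs.1.le hs.2 (by positivity)
    rw [div_mul_eq_mul_div]
    gcongr

lemma gg_beta_int {α β γ : ℝ} (hα : 0 < α) (hβ : 0 < β) (hγ : 0 < γ) (l t : ℝ) (ht : 0 < t) :
    IntervalIntegrable (fun s => gg α β l s * (t - s) ^ (γ - 1)) volume 0 t := by
  have := (beta_int hβ hγ ht).continuousOn_mul (mlc hα hβ l).continuousOn
  apply this.congr
  intro s _
  simp only [gg]; ring

lemma gg_gg_int {α β γ : ℝ} (hα : 0 < α) (hβ : 0 < β) (hγ : 0 < γ) (l m t : ℝ) (ht : 0 < t) :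
    IntervalIntegrable (fun s => gg α β l s * gg α γ m (t - s)) volume 0 t := by
  have := (gg_beta_int hα hβ hγ l t ht).continuousOn_mul
    (((mlc hα hγ m).comp (by fun_prop : Continuous fun s : ℝ => t - s)).continuousOn)
  apply this.congr
  intro s _
  simp only [gg, Function.comp]; ring

/-- fractional integration -/
lemma gg_conv {α β γ : ℝ} (hα : 0 < α) (hβ : 0 < β) (hγ : 0 < γ) (l t : ℝ) (ht : 0 < t) :
    ∫ s in (0:ℝ)..t, gg α β l s * (t - s) ^ (γ - 1) = Real.Gamma γ * gg α (β + γ) l t := by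
  have h := conv_hasSum hα hβ l t ht (fun s => (t - s) ^ (γ - 1)) (beta_int hβ hγ ht)
  have h2 := (gg_hasSum hα (by linarith : 0 < β + γ) l t ht).mul_left (Real.Gamma γ)
  refine h.unique ?_
  refine hs_congr h2 (fun k => ?_) rfl
  rw [beta_real (by positivity) hγ ht]
  have := Gpos hα hβ k
  rw [add_assoc]
  field_simp

/-- resolvent identity -/
lemma gg_resolvent {α : ℝ} (hα : 0 < α) (l m t : ℝ) (ht : 0 < t) :
    gg α α l t - gg α α m t = (m - l) * ∫ s in (0:ℝ)..t, gg α α m s * gg α α l (t - s) := by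
  have hG : IntervalIntegrable (fun s => s ^ (α - 1) * gg α α l (t - s)) volume 0 t := by
    have := (beta_int hα hα ht).continuousOn_mul
      (((mlc hα hα l).comp (by fun_prop : Continuous fun s : ℝ => t - s)).continuousOn)
    apply this.congr
    intro s _
    simp only [gg, Function.comp]; ring
  have h := conv_hasSum hα hα m t ht (fun s => gg α α l (t - s)) hG
  set S := ∫ s in (0:ℝ)..t, gg α α m s * gg α α l (t - s) with hS
  have hI : ∀ k : ℕ, ∫ s in (0:ℝ)..t, s ^ (α * k + α - 1) * gg α α l (t - s) =
      Real.Gamma (α * k + α) * gg α (α * k + 2 * α) l t := by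
    intro k
    have := intervalIntegral.integral_comp_sub_left (a := 0) (b := t)
      (fun s => gg α α l s * (t - s) ^ (α * k + α - 1)) t
    simp only [sub_sub_cancel, sub_self, sub_zero] at this
    rw [gg_conv hα hα (by positivity : 0 < α * k + α) l t ht] at this
    rw [show α * k + 2 * α = α + (α * k + α) by ring, ← this]
    apply intervalIntegral.integral_congr
    intro s _
    simp only; ring
  have h1 : HasSum (fun k : ℕ => (-m) ^ k * gg α (α * k + 2 * α) l t) S := by
    refine hs_congr h (fun k => ?_) rfl
    rw [hI k]
    have := Gpos hα hα k
    field_simp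
  have h2 := gg_hasSum hα hα m t ht
  have h3 : HasSum (fun k : ℕ => (-m) ^ k * gg α (α * k + α) l t) (gg α α m t - l * S) := by
    refine hs_congr (h2.sub (h1.mul_left l)) (fun k => ?_) rfl
    rw [gg_rec hα (by positivity) l t ht, show α * k + α + α = α * k + 2 * α by ring]
    ring
  have h4 : HasSum (fun k : ℕ => (-m) ^ k * gg α (α * k + α) l t) (-m * S + gg α α l t) := by
    have := (hasSum_nat_add_iff (f := fun k : ℕ => (-m) ^ k * gg α (α * k + α) l t) 1 (g := -m * S)).1 ?_
    · simpa using this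
    · refine hs_congr (h1.mul_left (-m)) (fun k => ?_) rfl
      rw [pow_succ]; push_cast
      rw [show α * (k + 1 : ℝ) + α = α * k + 2 * α by ring]; ring
  have := h3.unique h4
  linarith

lemma gg_volterra {α : ℝ} (hα : 0 < α) (l t : ℝ) (ht : 0 < t) :
    Real.Gamma α * gg α α l t = t ^ (α - 1) - l * ∫ s in (0:ℝ)..t, gg α α l s * (t - s) ^ (α - 1) := by
  rw [gg_conv hα hα hα l t ht, gg_rec hα hα l t ht]
  have := Real.Gamma_pos_of_pos hα
  field_simp

lemma gg_cont {α β : ℝ} (hα : 0 < α) (hβ : 0 < β) (l : ℝ) : ContinuousOn (gg α β l) (Ioi 0) := by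
  unfold gg
  apply ContinuousOn.mul _ (mlc hα hβ l).continuousOn
  intro x hx
  exact (Real.continuousAt_rpow_const x _ (Or.inl (ne_of_gt hx))).continuousWithinAt

lemma int_pow {γ a t : ℝ} (hγ : 0 < γ) :
    ∫ s in a..t, (t - s) ^ (γ - 1) = (t - a) ^ γ / γ := by
  have := intervalIntegral.integral_comp_sub_left (a := a) (b := t) (fun s => s ^ (γ - 1)) t
  rw [this, sub_self, integral_rpow (Or.inl (by linarith))]
  rw [sub_add_cancel, Real.zero_rpow hγ.ne', sub_zero]

lemma int_pow_int {γ a t : ℝ} (hγ : 0 < γ) :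
    IntervalIntegrable (fun s => (t - s) ^ (γ - 1)) volume a t := by
  have := (intervalIntegral.intervalIntegrable_rpow' (a := t - a) (b := 0)
    (by linarith : -1 < γ - 1)).comp_sub_left t
  simpa using this

lemma gg_pos {α l : ℝ} (hα : 0 < α) (hα1 : α < 1) (hl : 0 < l) (t1 : ℝ) (ht1 : 0 < t1) :
    0 < gg α α l t1 := by
  by_contra hneg
  push Not at hneg
  have hΓ := Real.Gamma_pos_of_pos hα
  set H : ℝ → ℝ := fun t => ml α α (-l * t ^ α) with hH
  have hHc : Continuous H := mlc hα hα l
  have hH0 : 0 < H 0 := by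
    simp only [hH, Real.zero_rpow hα.ne', mul_zero]
    rw [ml_rec hα hα]; simp; exact hΓ
  have hsign : ∀ t, 0 < t → (0 < gg α α l t ↔ 0 < H t) := by
    intro t ht
    have : 0 < t ^ (α - 1) := by positivity
    simp only [gg]
    exact mul_pos_iff_of_pos_left this
  have hcomp : IsCompact (Icc 0 t1 ∩ {t | H t ≤ 0}) :=
    isCompact_Icc.inter_right (isClosed_le hHc continuous_const)
  have hne : (Icc 0 t1 ∩ {t | H t ≤ 0}).Nonempty := by
    refine ⟨t1, ⟨ht1.le, le_rfl⟩, ?_⟩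
    have := hsign t1 ht1
    by_contra h
    exact absurd (this.2 (not_le.1 h)) (not_lt.2 hneg)
  obtain ⟨t0, ⟨⟨ht0a, ht0b⟩, ht0c⟩, hmin⟩ := hcomp.exists_isLeast hne
  have ht0c : H t0 ≤ 0 := ht0c
  have ht0 : 0 < t0 := by
    rcases ht0a.eq_or_lt with h | h
    · rw [← h] at ht0c; linarith
    · exact h
  have hf0 : gg α α l t0 ≤ 0 := by
    by_contra h
    have := (hsign t0 ht0).1 (not_le.1 h)
    linarith
  have hfpos : ∀ t, 0 < t → t < t0 → 0 < gg α α l t := by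
    intro t ht htt
    rw [hsign t ht]
    by_contra h
    have := hmin ⟨⟨ht.le, by linarith⟩, not_lt.1 h⟩
    linarith
  -- choose δ
  obtain ⟨δ, hδ0, hδ1, hδ2⟩ : ∃ δ : ℝ, 0 < δ ∧ δ ≤ t0 / 2 ∧ l * (δ ^ α / α) ≤ Real.Gamma α / 4 := by
    have hc : Continuous fun d : ℝ => l * (d ^ α / α) :=
      continuous_const.mul ((Real.continuous_rpow_const hα.le).div_const _)
    have h1 : ∀ᶠ d in nhds (0:ℝ), l * (d ^ α / α) < Real.Gamma α / 4 := by
      apply hc.continuousAt.eventually_lt continuousAt_const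
      simp [Real.zero_rpow hα.ne', hΓ]
    have h2 : ∀ᶠ d in nhdsWithin (0:ℝ) (Ioi 0), l * (d ^ α / α) < Real.Gamma α / 4 := h1.filter_mono nhdsWithin_le_nhds
    have h3 : ∀ᶠ d in nhdsWithin (0:ℝ) (Ioi 0), d ∈ Ioc 0 (t0 / 2) :=
      Ioc_mem_nhdsGT (by linarith)
    obtain ⟨d, hd1, hd2⟩ := (h2.and h3).exists
    exact ⟨d, hd2.1, hd2.2, hd1.le⟩
  have hcf : ContinuousOn (gg α α l) (Icc (t0 - δ) t0) :=
    (gg_cont hα hα l).mono fun x hx => by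
      have := hx.1
      show 0 < x
      linarith
  obtain ⟨t, htm, htmax⟩ := isCompact_Icc.exists_isMaxOn ⟨t0, by constructor <;> linarith⟩ hcf
  have hM : ∀ s ∈ Icc (t0 - δ) t0, gg α α l s ≤ gg α α l t := fun s hs => htmax hs
  have hMpos : 0 < gg α α l t :=
    lt_of_lt_of_le (hfpos (t0 - δ) (by linarith) (by linarith)) (hM _ ⟨le_rfl, by linarith⟩)
  have htlt : t < t0 := by
    rcases htm.2.eq_or_lt with h | h
    · rw [h] at hMpos; linarith
    · exact h
  have htpos : 0 < t := by linarith [htm.1]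
  have V0 := gg_volterra hα l t0 ht0
  have V := gg_volterra hα l t htpos
  set M := gg α α l t with hMdef
  have hI0 := gg_beta_int hα hα hα l t0 ht0
  have hI := gg_beta_int hα hα hα l t htpos
  have hIa : IntervalIntegrable (fun s => gg α α l s * (t0 - s) ^ (α - 1)) volume 0 t :=
    hI0.mono_set (by rw [uIcc_of_le htpos.le, uIcc_of_le ht0.le]; exact Icc_subset_Icc_right htlt.le)
  have hIb : IntervalIntegrable (fun s => gg α α l s * (t0 - s) ^ (α - 1)) volume t t0 :=
    hI0.mono_set (by rw [uIcc_of_le htlt.le, uIcc_of_le ht0.le]; exact Icc_subset_Icc_left htpos.le)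
  have hsplit := intervalIntegral.integral_add_adjacent_intervals hIa hIb
  set ρ := (t0 / t) ^ (α - 1) with hρ
  have hρpos : 0 < ρ := by positivity
  have hA : ∫ s in (0:ℝ)..t, gg α α l s * (t0 - s) ^ (α - 1) ≤
      ρ * ∫ s in (0:ℝ)..t, gg α α l s * (t - s) ^ (α - 1) := by
    rw [← intervalIntegral.integral_const_mul]
    apply intervalIntegral.integral_mono_on_of_le_Ioo htpos.le hIa (hI.const_mul _)
    intro s hs
    have h1 := hfpos s hs.1 (by linarith [hs.2])
    rw [mul_left_comm]
    apply mul_le_mul_of_nonneg_left _ h1.le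
    have hts : 0 < t - s := by linarith [hs.2]
    rw [hρ, ← Real.mul_rpow (by positivity) hts.le]
    apply Real.rpow_le_rpow_of_nonpos (by positivity) _ (by linarith)
    rw [div_mul_eq_mul_div, div_le_iff₀ htpos]
    nlinarith [mul_pos hs.1 (sub_pos.2 htlt)]
  have hB : ∫ s in t..t0, gg α α l s * (t0 - s) ^ (α - 1) ≤ M * (δ ^ α / α) := by
    have h1 : ∫ s in t..t0, gg α α l s * (t0 - s) ^ (α - 1) ≤
        ∫ s in t..t0, M * (t0 - s) ^ (α - 1) := by
      apply intervalIntegral.integral_mono_on htlt.le hIb ((int_pow_int hα).const_mul _)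
      intro s hs
      apply mul_le_mul_of_nonneg_right _ (Real.rpow_nonneg (by linarith [hs.2]) _)
      exact hM s ⟨by linarith [hs.1, htm.1], hs.2⟩
    rw [intervalIntegral.integral_const_mul, int_pow hα] at h1
    refine h1.trans ?_
    have : (t0 - t) ^ α ≤ δ ^ α := Real.rpow_le_rpow (by linarith) (by linarith [htm.1]) hα.le
    gcongr
  have hρt : t0 ^ (α - 1) = ρ * t ^ (α - 1) := by
    rw [hρ, ← Real.mul_rpow (by positivity) htpos.le, div_mul_cancel₀ _ htpos.ne']
  have hρhalf : 1 / 2 ≤ ρ := by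
    have h1 : (2:ℝ) ^ (α - 1) ≤ ρ := by
      apply Real.rpow_le_rpow_of_nonpos (by positivity) _ (by linarith)
      rw [div_le_iff₀ htpos]; linarith [htm.1]
    have h2 : (2:ℝ) ^ (-1 : ℝ) ≤ 2 ^ (α - 1) := Real.rpow_le_rpow_of_exponent_le (by norm_num) (by linarith)
    rw [Real.rpow_neg_one] at h2
    linarith
  have e1 : Real.Gamma α * gg α α l t0 ≥ ρ * (Real.Gamma α * M) - M * (Real.Gamma α / 4) := by
    rw [V0, ← hsplit, V, hρt]
    have := mul_le_mul_of_nonneg_left hA hl.le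
    have := mul_le_mul_of_nonneg_left hB hl.le
    have := mul_le_mul_of_nonneg_left hδ2 hMpos.le
    nlinarith
  nlinarith [mul_pos hΓ hMpos, mul_nonneg (sub_nonneg.2 hρhalf) (mul_pos hΓ hMpos).le, mul_nonneg hΓ.le (neg_nonneg.2 hf0)]

lemma gg_self_int {α β : ℝ} (hα : 0 < α) (hβ : 0 < β) (l t : ℝ) (ht : 0 < t) :
    IntervalIntegrable (gg α β l) volume 0 t := by
  have := gg_beta_int hα hβ one_pos l t ht
  simpa using this

lemma gg_int {α β : ℝ} (hα : 0 < α) (hβ : 0 < β) (l t : ℝ) (ht : 0 < t) :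
    ∫ s in (0:ℝ)..t, gg α β l s = gg α (β + 1) l t := by
  have := gg_conv hα hβ one_pos l t ht
  simpa using this

/-- `u = E_{α,1}(-l t^α)` -/
lemma u_eq {α : ℝ} (hα : 0 < α) (l t : ℝ) (ht : 0 < t) :
    gg α 1 l t = 1 - l * ∫ s in (0:ℝ)..t, gg α α l s := by
  rw [gg_int hα hα l t ht, gg_rec hα one_pos l t ht, add_comm 1 α]
  simp

lemma u_nonneg {α l : ℝ} (hα : 0 < α) (hα1 : α < 1) (hl : 0 < l) (t : ℝ) (ht : 0 < t) :
    0 ≤ gg α 1 l t := by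
  have h := gg_conv hα hα (by linarith : 0 < 1 - α) l t ht
  rw [add_sub_cancel] at h
  have hΓ := Real.Gamma_pos_of_pos (by linarith : 0 < 1 - α)
  have : 0 ≤ ∫ s in (0:ℝ)..t, gg α α l s * (t - s) ^ (1 - α - 1) := by
    rw [intervalIntegral.integral_of_le ht.le]
    apply setIntegral_nonneg measurableSet_Ioc
    intro s hs
    exact mul_nonneg (gg_pos hα hα1 hl s hs.1).le (Real.rpow_nonneg (by linarith [hs.2]) _)
  rw [h] at this
  exact nonneg_of_mul_nonneg_right this hΓ

lemma f_int_le {α l : ℝ} (hα : 0 < α) (hα1 : α < 1) (hl : 0 < l) (t : ℝ) (ht : 0 < t) :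
    ∫ s in (0:ℝ)..t, gg α α l s ≤ 1 / l := by
  have h1 := u_nonneg hα hα1 hl t ht
  rw [u_eq hα l t ht] at h1
  rw [le_div_iff₀ hl]; linarith

lemma u_diff {α l : ℝ} (hα : 0 < α) (s t : ℝ) (hs : 0 < s) (hst : s ≤ t) :
    gg α 1 l s - gg α 1 l t = l * ∫ x in s..t, gg α α l x := by
  have ht : 0 < t := by linarith
  rw [u_eq hα l t ht, u_eq hα l s hs]
  have h1 := gg_self_int hα hα l t ht
  have h2 := gg_self_int hα hα l s hs
  rw [← intervalIntegral.integral_interval_sub_left h1 h2]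
  ring

lemma u_anti {α l : ℝ} (hα : 0 < α) (hα1 : α < 1) (hl : 0 < l) (s t : ℝ) (hs : 0 < s) (hst : s ≤ t) :
    gg α 1 l t ≤ gg α 1 l s := by
  have h := u_diff (l := l) hα s t hs hst
  have : 0 ≤ ∫ x in s..t, gg α α l x := by
    apply intervalIntegral.integral_nonneg hst
    intro x hx
    exact (gg_pos hα hα1 hl x (by linarith [hx.1])).le
  nlinarith

lemma u_bound {α l : ℝ} (hα : 0 < α) (hα1 : α < 1) (hl : 0 < l) (t : ℝ) (ht : 0 < t) :
    gg α 1 l t ≤ (Real.Gamma α * α / l) * t ^ (-α) := by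
  have hΓ := Real.Gamma_pos_of_pos hα
  have h1 := gg_rec hα one_pos l t ht
  have h2 := gg_conv hα one_pos hα l t ht
  have h3 : ∫ s in (0:ℝ)..t, gg α 1 l t * (t - s) ^ (α - 1) ≤
      ∫ s in (0:ℝ)..t, gg α 1 l s * (t - s) ^ (α - 1) := by
    apply intervalIntegral.integral_mono_on_of_le_Ioo ht.le ((int_pow_int hα).const_mul _)
      (gg_beta_int hα one_pos hα l t ht)
    intro s hs
    exact mul_le_mul_of_nonneg_right (u_anti hα hα1 hl s t hs.1 hs.2.le)
      (Real.rpow_nonneg (by linarith [hs.2]) _)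
  rw [intervalIntegral.integral_const_mul, int_pow hα, h2, sub_zero] at h3
  have h0 := u_nonneg hα hα1 hl t ht
  simp at h1
  have hta : 0 < t ^ α := by positivity
  rw [Real.rpow_neg ht.le, ← div_eq_mul_inv, le_div_iff₀ hta, le_div_iff₀ hl]
  have h4 : l * gg α (1 + α) l t ≤ 1 := by linarith
  have h5 : gg α 1 l t * t ^ α ≤ α * (Real.Gamma α * gg α (1 + α) l t) := by
    rw [← mul_div_assoc, div_le_iff₀ hα] at h3; linarith
  nlinarith [mul_le_mul_of_nonneg_right h5 hl.le, mul_le_mul_of_nonneg_left h4 (mul_pos hα hΓ).le]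

lemma h_anti {α x y : ℝ} (hα : 0 < α) (hα1 : α < 1) (hx : 0 < x) (hxy : x ≤ y) :
    ml α α (-y) ≤ ml α α (-x) := by
  have h := gg_resolvent hα x y 1 one_pos
  have : 0 ≤ ∫ s in (0:ℝ)..1, gg α α y s * gg α α x (1 - s) := by
    rw [intervalIntegral.integral_of_le one_pos.le, integral_Ioc_eq_integral_Ioo]
    apply setIntegral_nonneg measurableSet_Ioo
    intro s hs
    exact mul_nonneg (gg_pos hα hα1 (by linarith) s hs.1).le
      (gg_pos hα hα1 hx (1 - s) (by linarith [hs.2])).le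
  have h2 := mul_nonneg (sub_nonneg.2 hxy) this
  rw [← h] at h2
  simp [gg] at h2
  exact h2

lemma f_anti {α l : ℝ} (hα : 0 < α) (hα1 : α < 1) (hl : 0 < l) (s t : ℝ) (hs : 0 < s) (hst : s ≤ t) :
    gg α α l t ≤ gg α α l s := by
  have hp := gg_pos hα hα1 hl t (by linarith)
  have ht : 0 < t := by linarith
  unfold gg at hp ⊢
  have hp' : 0 < ml α α (-l * t ^ α) := by
    have : 0 < t ^ (α - 1) := by positivity
    exact pos_of_mul_pos_right hp this.le
  apply mul_le_mul
  · exact Real.rpow_le_rpow_of_nonpos hs hst (by linarith)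
  · rw [neg_mul, neg_mul]
    apply h_anti hα hα1 (by positivity)
    have := Real.rpow_le_rpow hs.le hst hα.le
    gcongr
  · exact hp'.le
  · positivity

lemma f_bound {α l : ℝ} (hα : 0 < α) (hα1 : α < 1) (hl : 0 < l) :
    ∃ A : ℝ, 0 < A ∧ ∀ t, 0 < t → gg α α l t ≤ A * t ^ (-α - 1) := by
  have hΓ := Real.Gamma_pos_of_pos hα
  refine ⟨(Real.Gamma α * α / l) * 2 ^ α * 2 / l, by positivity, ?_⟩
  intro t ht
  have h2 : 0 < t / 2 := by linarith
  have h := u_diff (l := l) hα (t / 2) t h2 (by linarith)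
  have hb := u_bound hα hα1 hl (t / 2) h2
  have hu := u_nonneg hα hα1 hl t ht
  have hi : (t / 2) * gg α α l t ≤ ∫ x in (t/2)..t, gg α α l x := by
    have : ∫ x in (t/2)..t, gg α α l t ≤ ∫ x in (t/2)..t, gg α α l x := by
      apply intervalIntegral.integral_mono_on (by linarith) (by simp)
      · apply ContinuousOn.intervalIntegrable
        apply (gg_cont hα hα l).mono
        rw [uIcc_of_le (by linarith)]
        intro x hx
        exact lt_of_lt_of_le h2 hx.1
      · intro x hx
        exact f_anti hα hα1 hl x t (lt_of_lt_of_le h2 hx.1) hx.2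
    rw [intervalIntegral.integral_const] at this
    simp only [smul_eq_mul] at this
    linarith
  have e : (t / 2) ^ (-α) = t ^ (-α) * 2 ^ α := by
    rw [Real.div_rpow ht.le (by norm_num), Real.rpow_neg (by norm_num : (0:ℝ) ≤ 2), div_inv_eq_mul]
  rw [e] at hb
  rw [Real.rpow_sub ht, Real.rpow_one]
  have h3 : l * ((t / 2) * gg α α l t) ≤ Real.Gamma α * α / l * (t ^ (-α) * 2 ^ α) := by
    have := mul_le_mul_of_nonneg_left hi hl.le
    linarith
  rw [← mul_div_assoc, le_div_iff₀ ht, div_mul_eq_mul_div, le_div_iff₀ hl]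
  linarith

lemma pow_diff (p : ℝ) : ∃ n : ℝ, 0 ≤ n ∧ ∀ y, 0 < y → y ≤ 1 →
    |1 - y ^ p| ≤ n * (1 - y) * (1 + y ^ p) := by
  obtain ⟨n, hn⟩ := exists_nat_ge |p|
  refine ⟨n, by positivity, ?_⟩
  have key : ∀ y : ℝ, 0 < y → y ≤ 1 → ∀ q : ℝ, q ≤ n → 1 - y ^ q ≤ n * (1 - y) := by
    intro y hy hy1 q hq
    have h1 : y ^ n ≤ y ^ q := by
      rw [← Real.rpow_natCast]
      exact Real.rpow_le_rpow_of_exponent_ge hy hy1 hq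
    have h2 := one_add_mul_le_pow (a := y - 1) (by linarith) n
    rw [add_sub_cancel] at h2
    nlinarith
  intro y hy hy1
  have hyp : 0 < y ^ p := by positivity
  have hn0 : 0 ≤ (n : ℝ) * (1 - y) := mul_nonneg (by positivity) (by linarith)
  rw [abs_le]
  constructor
  · have h := key y hy hy1 (-p) (by linarith [neg_abs_le p])
    rw [Real.rpow_neg hy.le] at h
    have := mul_le_mul_of_nonneg_right h hyp.le
    rw [sub_mul, inv_mul_cancel₀ hyp.ne'] at this
    nlinarith
  · have h := key y hy hy1 p (by linarith [le_abs_self p])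
    nlinarith

lemma g_bound {α β l : ℝ} (hα : 0 < α) (hα1 : α < 1) (hβ : 0 < β) (hl : 0 < l) :
    ∃ B : ℝ, 0 ≤ B ∧ ∀ t, 0 < t → |gg α β l t| ≤ B * t ^ (β - α - 1) := by
  obtain ⟨A, hA0, hA⟩ := f_bound hα hα1 hl
  obtain ⟨n, hn0, hn⟩ := pow_diff (β - 1)
  have hα' : 0 < 1 - α := by linarith
  have hΓβ := Real.Gamma_pos_of_pos hβ
  have hΓα := Real.Gamma_pos_of_pos hα
  set c1 := Real.Gamma (1 - α) * Real.Gamma 1 / Real.Gamma (1 - α + 1) with hc1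
  set c2 := Real.Gamma (1 - α) * Real.Gamma β / Real.Gamma (1 - α + β) with hc2
  have hc1p : 0 < c1 := by
    have := Real.Gamma_pos_of_pos hα'
    have := Real.Gamma_pos_of_pos (by linarith : 0 < 1 - α + 1)
    have := Real.Gamma_pos_of_pos (one_pos)
    positivity
  have hc2p : 0 < c2 := by
    have := Real.Gamma_pos_of_pos hα'
    have := Real.Gamma_pos_of_pos (by linarith : 0 < 1 - α + β)
    positivity
  refine ⟨(Real.Gamma α * α / l + l * (A * n * (c1 + c2))) / Real.Gamma β, by positivity, ?_⟩
  intro t ht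
  have e1 : Real.Gamma β * gg α β l t = t ^ (β - 1) * gg α 1 l t +
      l * ∫ s in (0:ℝ)..t, gg α α l s * (t ^ (β - 1) - (t - s) ^ (β - 1)) := by
    have hs : ∫ s in (0:ℝ)..t, gg α α l s * (t ^ (β - 1) - (t - s) ^ (β - 1)) =
        (∫ s in (0:ℝ)..t, gg α α l s) * t ^ (β - 1) -
          ∫ s in (0:ℝ)..t, gg α α l s * (t - s) ^ (β - 1) := by
      rw [← intervalIntegral.integral_mul_const, ← intervalIntegral.integral_sub
        ((gg_self_int hα hα l t ht).mul_const _) (gg_beta_int hα hα hβ l t ht)]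
      simp only [mul_sub]
    rw [hs, gg_conv hα hα hβ l t ht, u_eq hα l t ht, gg_rec hα hβ l t ht, add_comm β α]
    field_simp
    ring
  have e2 : |∫ s in (0:ℝ)..t, gg α α l s * (t ^ (β - 1) - (t - s) ^ (β - 1))| ≤
      A * n * (c1 + c2) * t ^ (β - α - 1) := by
    have hI1 := (beta_int hα' one_pos ht).const_mul (A * n * t⁻¹ * t ^ (β - 1))
    have hI2 := (beta_int hα' hβ ht).const_mul (A * n * t⁻¹)
    have := intervalIntegral.norm_integral_le_of_norm_le (μ := volume) (a := 0) (b := t)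
      (f := fun s => gg α α l s * (t ^ (β - 1) - (t - s) ^ (β - 1))) ht.le
      ?_ (hI1.add hI2)
    · refine this.trans (le_of_eq ?_)
      rw [intervalIntegral.integral_add hI1 hI2, intervalIntegral.integral_const_mul,
        intervalIntegral.integral_const_mul, beta_real hα' one_pos ht, beta_real hα' hβ ht, ← hc1, ← hc2]
      have p1 : t ^ (1 - α + 1 - 1) = t ^ (-α) * t := by
        rw [← Real.rpow_add_one ht.ne']; congr 1; ring
      have p2 : t ^ (1 - α + β - 1) = t ^ (-α) * t * t ^ (β - 1) := by
        rw [← Real.rpow_add_one ht.ne', ← Real.rpow_add ht]; congr 1; ring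
      have p3 : t ^ (β - α - 1) = t ^ (-α) * t ^ (β - 1) := by
        rw [← Real.rpow_add ht]; congr 1; ring
      rw [p1, p2, p3]
      field_simp
    · have hne : ∀ᵐ s : ℝ, s ≠ t := by simp [ae_iff]
      filter_upwards [hne] with s hst hs
      have h : s < t := lt_of_le_of_ne hs.2 hst
      have hfs := gg_pos hα hα1 hl s hs.1
      rw [Real.norm_eq_abs, abs_mul, abs_of_pos hfs]
      have hts : 0 < t - s := by linarith
      have hy := hn ((t - s) / t) (by positivity) (by rw [div_le_one ht]; linarith [hs.1])
      have hsplit : (t - s) ^ (β - 1) = t ^ (β - 1) * ((t - s) / t) ^ (β - 1) := by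
        rw [← Real.mul_rpow ht.le (by positivity), mul_div_cancel₀ _ ht.ne']
      have htp : 0 < t ^ (β - 1) := by positivity
      have h1 : |t ^ (β - 1) - (t - s) ^ (β - 1)| ≤ n * (s / t) * (t ^ (β - 1) + (t - s) ^ (β - 1)) := by
        rw [hsplit, show t ^ (β - 1) - t ^ (β - 1) * ((t - s) / t) ^ (β - 1) =
          t ^ (β - 1) * (1 - ((t - s) / t) ^ (β - 1)) by ring, abs_mul, abs_of_pos htp]
        refine (mul_le_mul_of_nonneg_left hy htp.le).trans (le_of_eq ?_)
        rw [show 1 - (t - s) / t = s / t by field_simp; ring]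
        ring
      have h2 := hA s hs.1
      have hs0 := hs.1
      calc _ ≤ (A * s ^ (-α - 1)) * (n * (s / t) * (t ^ (β - 1) + (t - s) ^ (β - 1))) := by
            apply mul_le_mul h2 h1 (abs_nonneg _) (by positivity)
        _ = _ := by
            rw [show (1 - α - 1 : ℝ) = (-α - 1) + 1 by ring, Real.rpow_add_one hs0.ne']
            simp
            ring
  have e3 : t ^ (β - 1) * gg α 1 l t ≤ Real.Gamma α * α / l * t ^ (β - α - 1) := by
    have := mul_le_mul_of_nonneg_left (u_bound hα hα1 hl t ht) (by positivity : 0 ≤ t ^ (β - 1))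
    refine this.trans (le_of_eq ?_)
    rw [show β - α - 1 = (β - 1) + -α by ring, Real.rpow_add ht]; ring
  have e4 : 0 ≤ t ^ (β - 1) * gg α 1 l t :=
    mul_nonneg (by positivity) (u_nonneg hα hα1 hl t ht)
  have e5 : Real.Gamma β * |gg α β l t| = |Real.Gamma β * gg α β l t| := by
    rw [abs_mul, abs_of_pos hΓβ]
  rw [div_mul_eq_mul_div, le_div_iff₀ hΓβ, mul_comm, e5, e1]
  refine (abs_add_le _ _).trans ?_
  rw [abs_mul l, abs_of_pos hl, abs_of_nonneg e4]
  have := mul_le_mul_of_nonneg_left e2 hl.le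
  linarith

lemma g_bound' {α β l : ℝ} (hα : 0 < α) (hα1 : α < 1) (hβ : 0 < β) (hl : 0 < l) :
    ∃ B : ℝ, 0 ≤ B ∧ ∀ t, 0 < t → |gg α β l t| ≤ B * t ^ (β - 1) := by
  obtain ⟨B, hB0, hB⟩ := g_bound hα hα1 (by linarith : 0 < β + α) hl
  have hΓβ := Real.Gamma_pos_of_pos hβ
  refine ⟨1 / Real.Gamma β + l * B, by positivity, ?_⟩
  intro t ht
  have := hB t ht
  rw [add_sub_cancel_right] at this
  rw [gg_rec hα hβ l t ht]
  refine (abs_sub _ _).trans ?_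
  rw [abs_mul, abs_of_pos hl, abs_of_nonneg (by positivity)]
  have := mul_le_mul_of_nonneg_left this hl.le
  rw [add_mul, mul_assoc l B, one_div_mul_eq_div]
  linarith

lemma final {α β l m δ : ℝ} (hα : 0 < α) (hα1 : α < 1) (hβ : 0 < β) (hm : 0 < m)
    (B N : ℝ) (hB0 : 0 ≤ B) 
    (hB : ∀ t, 0 < t → |gg α β l t| ≤ B * t ^ δ)
    (hN : ∀ t, 0 < t → ∫ s in (0:ℝ)..t, |gg α β l s| ≤ N * t ^ (δ + α + 1)) :
    (fun t => ∫ s in (0:ℝ)..t, gg α α m s * gg α β l (t - s)) =O[atTop] fun t : ℝ => t ^ δ := by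
  obtain ⟨A, hA0, hA⟩ := f_bound hα hα1 hm
  have pw : ∀ e t s : ℝ, 0 < t → t / 2 ≤ s → s ≤ t → s ^ e ≤ 2 ^ |e| * t ^ e := by
    intro e t s ht h1 h2
    have hs : 0 < s := by linarith
    rcases le_total 0 e with he | he
    · have := Real.rpow_le_rpow hs.le h2 he
      have h3 : (1:ℝ) ≤ 2 ^ |e| := Real.one_le_rpow (by norm_num) (abs_nonneg e)
      have : 0 < t ^ e := by positivity
      nlinarith
    · have := Real.rpow_le_rpow_of_nonpos (by linarith) h1 he
      rw [Real.div_rpow ht.le (by norm_num)] at this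
      rw [abs_of_nonpos he, Real.rpow_neg (by norm_num), inv_mul_eq_div]
      exact this
  apply IsBigO.of_bound (B * 2 ^ |δ| * (1 / m) + A * 2 ^ |-α - 1| * N)
  filter_upwards [eventually_gt_atTop 0] with t ht
  have hI1 := (gg_self_int hα hα m t ht).const_mul (B * (2 ^ |δ| * t ^ δ))
  have hI2' : IntervalIntegrable (fun s => |gg α β l (t - s)|) volume 0 t := by
    have := ((gg_self_int hα hβ l t ht).abs.comp_sub_left t).symm
    simpa using this
  have hI2 := hI2'.const_mul (A * (2 ^ |-α - 1| * t ^ (-α - 1)))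
  have hrev : ∫ s in (0:ℝ)..t, |gg α β l (t - s)| = ∫ s in (0:ℝ)..t, |gg α β l s| := by
    rw [intervalIntegral.integral_comp_sub_left (fun s => |gg α β l s|) t]; simp
  have := intervalIntegral.norm_integral_le_of_norm_le (μ := volume) (a := 0) (b := t)
      (f := fun s => gg α α m s * gg α β l (t - s)) ht.le ?_ (hI1.add hI2)
  · refine this.trans ?_
    rw [intervalIntegral.integral_add hI1 hI2, intervalIntegral.integral_const_mul,
      intervalIntegral.integral_const_mul, hrev, Real.norm_of_nonneg (by positivity)]
    have h1 := f_int_le hα hα1 hm t ht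
    have h2 := hN t ht
    have e : t ^ δ = t ^ (-α - 1) * t ^ (δ + α + 1) := by
      rw [← Real.rpow_add ht]; congr 1; ring
    calc _ ≤ B * (2 ^ |δ| * t ^ δ) * (1 / m) +
          A * (2 ^ |-α - 1| * t ^ (-α - 1)) * (N * t ^ (δ + α + 1)) := by
            gcongr
      _ = B * 2 ^ |δ| * (1 / m) * t ^ δ + 
          A * 2 ^ |-α - 1| * N * (t ^ (-α - 1) * t ^ (δ + α + 1)) := by ring
      _ = _ := by rw [← e]; ring
  · have hne : ∀ᵐ s : ℝ, s ≠ t := by simp [ae_iff]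
    filter_upwards [hne] with s hst hs
    have hlt : s < t := lt_of_le_of_ne hs.2 hst
    have hfs := gg_pos hα hα1 hm s hs.1
    rw [Real.norm_eq_abs, abs_mul, abs_of_pos hfs]
    have hn1 : 0 ≤ B * (2 ^ |δ| * t ^ δ) * gg α α m s := by positivity
    have hn2 : 0 ≤ A * (2 ^ |-α - 1| * t ^ (-α - 1)) * |gg α β l (t - s)| := by positivity
    rcases le_total s (t / 2) with h | h
    · have h1 := hB (t - s) (by linarith)
      have h2 := pw δ t (t - s) ht (by linarith) (by linarith [hs.1])
      have h3 : |gg α β l (t - s)| ≤ B * (2 ^ |δ| * t ^ δ) := h1.trans (by gcongr)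
      have := mul_le_mul_of_nonneg_left h3 hfs.le
      linarith
    · have h1 := hA s hs.1
      have h2 := pw (-α - 1) t s ht (by linarith) hs.2
      have h3 : gg α α m s ≤ A * (2 ^ |-α - 1| * t ^ (-α - 1)) := h1.trans (by gcongr)
      have := mul_le_mul_of_nonneg_right h3 (abs_nonneg (gg α β l (t - s)))
      linarith

/-- asymptotics of the solution: for `0<α<1`, `β>0`, `λ,μ>0`, with
`φ(t) = ∫₀ᵗ τ^{α−1} E_{α,α}(−μτ^α)(t−τ)^{β−1} E_{α,β}(−λ(t−τ)^α) dτ`,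
as `t → +∞` one has `φ(t) = O(t^{β−α−1})` if `α ≠ β` and `φ(t) = O(t^{−α−1})`
if `α = β`. -/
theorem solution_asymptotics (α β lam mu : ℝ)
    (hα : 0 < α) (hα1 : α < 1) (hβ : 0 < β) (hlam : 0 < lam) (hmu : 0 < mu) :
    let φ : ℝ → ℝ := fun t => ∫ τ in (0:ℝ)..t, τ ^ (α - 1) * ml α α (-mu * τ ^ α) *
      ((t - τ) ^ (β - 1) * ml α β (-lam * (t - τ) ^ α))
    (α ≠ β → φ =O[Filter.atTop] fun t : ℝ => t ^ (β - α - 1)) ∧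
    (α = β → φ =O[Filter.atTop] fun t : ℝ => t ^ (-α - 1)) := by
  intro φ
  constructor
  · intro _
    obtain ⟨B, hB0, hB⟩ := g_bound hα hα1 hβ hlam
    obtain ⟨C, hC0, hC⟩ := g_bound' hα hα1 hβ hlam
    refine final hα hα1 hβ hmu B (C / β) hB0 hB ?_
    intro t ht
    have h1 : ∫ s in (0:ℝ)..t, |gg α β lam s| ≤ ∫ s in (0:ℝ)..t, C * s ^ (β - 1) := by
      apply intervalIntegral.integral_mono_on_of_le_Ioo ht.le (gg_self_int hα hβ lam t ht).abs
        ((intervalIntegral.intervalIntegrable_rpow' (by linarith)).const_mul _)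
      intro s hs
      exact hC s hs.1
    refine h1.trans (le_of_eq ?_)
    rw [intervalIntegral.integral_const_mul, integral_rpow (Or.inl (by linarith)), sub_add_cancel,
      Real.zero_rpow hβ.ne', show β - α - 1 + α + 1 = β by ring]
    ring
  · intro h
    subst h
    obtain ⟨A, hA0, hA⟩ := f_bound hα hα1 hlam
    refine final hα hα1 hα hmu A (1 / lam) hA0.le ?_ ?_
    · intro t ht
      rw [abs_of_pos (gg_pos hα hα1 hlam t ht)]
      exact hA t ht
    · intro t ht
      rw [show -α - 1 + α + 1 = (0:ℝ) by ring, Real.rpow_zero, mul_one]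
      refine le_trans (le_of_eq ?_) (f_int_le hα hα1 hlam t ht)
      rw [intervalIntegral.integral_of_le ht.le, intervalIntegral.integral_of_le ht.le]
      apply setIntegral_congr_fun measurableSet_Ioc
      intro s hs
      exact abs_of_pos (gg_pos hα hα1 hlam s hs.1)
end

section
/- (Classical solvability in 1D, Theorem 5) Let 0<α<1, T>0, and let the Sturm–Liouville eigendata (λ_i, X_i) on [0,l] satisfy the stated hypotheses. Let (c_i) be real numbers with ∑_{i=1}^∞ λ_i⁴ c_i² < ∞ and suppose u₀(x) = ∑_{i=1}^∞ c_i X_i(x) converges uniformly on [0,l]. Then the series u(x,t) = ∑_{i=1}^∞ c_i E_α(−λ_i t^α) X_i(x) converges uniformly on [0,l]×[0,T] to a continuous function u which satisfies: u(x,0) = u₀(x) for x ∈ [0,l]; u(0,t) = u(l,t) = 0 for t ∈ [0,T]; for each t ∈ (0,T) the function x ↦ u(x,t) is twice continuously differentiable on (0,l) with ∂²u/∂x² = ∑_i c_i E_α(−λ_i t^α) X_i''(x); for each x ∈ (0,l) the Caputo derivative D_t^α u(x,·) exists on (0,T) and equals −∑_i c_i λ_i E_α(−λ_i t^α) X_i(x);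 and u satisfies (D_t^α u)(x,t) = ∂/∂x(p(x) ∂u/∂x(x,t)) − q(x) u(x,t) for all x ∈ (0,l), t ∈ (0,T). -/
open MeasureTheory Set Filter

/-- The Caputo fractional derivative of order `α` of `f` at `t`:
`(D^α f)(t) = (1/Γ(1−α)) ∫₀ᵗ (t−s)^{−α} f'(s) ds`. -/
noncomputable def caputo (α : ℝ) (f : ℝ → ℝ) (t : ℝ) : ℝ :=
  (1 / Real.Gamma (1 - α)) * ∫ s in (0:ℝ)..t, (t - s) ^ (-α) * deriv f s

/-- Sturm–Liouville eigendata on `[0,l]` for the operator `L(X) = −(pX')' + qX` with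
Dirichlet boundary conditions: positive eigenvalues `λ_i → ∞`, eigenfunctions
`X_i ∈ C²([0,l])` vanishing at `0` and `l`, orthonormal in `L²(0,l)`, and the series
`∑ |X_i(x)|²/λ_i`, `∑ |X_i'(x)|²/λ_i²`, `∑ |X_i''(x)|²/λ_i³` converging uniformly
on `[0,l]`. -/
structure SturmLiouvilleData (l : ℝ) (p q : ℝ → ℝ) (lam : ℕ → ℝ) (X : ℕ → ℝ → ℝ) :
    Prop where
  hl : 0 < l
  hp : ContDiffOn ℝ 1 p (Set.Icc 0 l)
  hppos : ∀ x ∈ Set.Icc (0:ℝ) l, 0 < p x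
  hq : ContinuousOn q (Set.Icc 0 l)
  hqnn : ∀ x ∈ Set.Icc (0:ℝ) l, 0 ≤ q x
  hlam : ∀ i, 0 < lam i
  hlamtop : Filter.Tendsto lam Filter.atTop Filter.atTop
  hX : ∀ i, ContDiffOn ℝ 2 (X i) (Set.Icc 0 l)
  heig : ∀ i, ∀ x ∈ Set.Ioo (0:ℝ) l,
    -(deriv (fun y => p y * deriv (X i) y) x) + q x * X i x = lam i * X i x
  hbc0 : ∀ i, X i 0 = 0
  hbcl : ∀ i, X i l = 0
  horth : ∀ i j, (∫ x in (0:ℝ)..l, X i x * X j x) = if i = j then 1 else 0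
  hser1 : ∃ g : ℝ → ℝ, TendstoUniformlyOn
    (fun N x => ∑ i ∈ Finset.range N, (X i x) ^ 2 / lam i) g Filter.atTop (Set.Icc 0 l)
  hser2 : ∃ g : ℝ → ℝ, TendstoUniformlyOn
    (fun N x => ∑ i ∈ Finset.range N, (deriv (X i) x) ^ 2 / (lam i) ^ 2) g
    Filter.atTop (Set.Icc 0 l)
  hser3 : ∃ g : ℝ → ℝ, TendstoUniformlyOn
    (fun N x => ∑ i ∈ Finset.range N, (deriv (deriv (X i)) x) ^ 2 / (lam i) ^ 3) g
    Filter.atTop (Set.Icc 0 l)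

/-- Lower bound for the Gamma function. -/
lemma cs_gamma_lower (R x : ℝ) (hR : 0 < R) (hx : 1 ≤ x) :
    R ^ (x - 1) * Real.exp (-R) ≤ Real.Gamma x := by
  have hx0 : 0 < x := by linarith
  rw [Real.Gamma_eq_integral hx0, ← integral_exp_neg_Ioi R, ← integral_const_mul]
  have hint := Real.GammaIntegral_convergent hx0
  have hsub : Ioi R ⊆ Ioi (0:ℝ) := Ioi_subset_Ioi hR.le
  calc ∫ t in Ioi R, R ^ (x - 1) * Real.exp (-t)
      ≤ ∫ t in Ioi R, Real.exp (-t) * t ^ (x - 1) := by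
        refine setIntegral_mono_on ?_ (hint.mono_set hsub) measurableSet_Ioi ?_
        · exact (integrableOn_exp_neg_Ioi R).const_mul _
        · intro t ht
          rw [mul_comm]
          gcongr
          exact le_of_lt ht
    _ ≤ ∫ t in Ioi 0, Real.exp (-t) * t ^ (x - 1) := by
        refine setIntegral_mono_set hint ?_ hsub.eventuallyLE
        filter_upwards [ae_restrict_mem measurableSet_Ioi] with t ht
        have : (0:ℝ) < t := ht
        positivity

lemma cs_gpos (α β : ℝ) (hα : 0 < α) (hβ : 0 < β) (k : ℕ) : 0 < Real.Gamma (α * k + β) :=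
  Real.Gamma_pos_of_pos (by positivity)

/-- Absolute summability of the differentiated Mittag-Leffler series. -/
lemma cs_summable_deriv (α β r : ℝ) (hα : 0 < α) (hβ : 0 < β) (hr : 0 ≤ r) :
    Summable fun k : ℕ => ((k:ℝ) + 1) * r ^ k / Real.Gamma (α * k + β) := by
  obtain ⟨R, hR1, hR⟩ : ∃ R : ℝ, 0 < R ∧ 4 * r + 1 ≤ R ^ α := by
    refine ⟨(4 * r + 1) ^ (1 / α), by positivity, ?_⟩
    rw [← Real.rpow_mul (by positivity), one_div_mul_cancel hα.ne', Real.rpow_one]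
  have hRa : 0 < R ^ α := by positivity
  have hgeo : Summable fun k : ℕ => (R ^ (1 - β) * Real.exp R) * (1/2 : ℝ) ^ k :=
    (summable_geometric_of_lt_one (by norm_num) (by norm_num)).mul_left _
  refine Summable.of_norm_bounded_eventually_nat hgeo ?_
  have hev : ∀ᶠ k : ℕ in atTop, 1 ≤ α * k + β := by
    obtain ⟨n, hn⟩ := exists_nat_ge (1 / α)
    filter_upwards [eventually_ge_atTop n] with k hk
    have : 1 / α ≤ k := hn.trans (by exact_mod_cast hk)
    rw [div_le_iff₀ hα] at this
    linarith
  filter_upwards [hev] with k hk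
  have hg := cs_gamma_lower R (α * k + β) hR1 hk
  have hgp := cs_gpos α β hα hβ k
  rw [Real.norm_of_nonneg (by positivity), div_le_iff₀ hgp]
  have h1 : (k:ℝ) + 1 ≤ 2 ^ k := by
    have := Nat.lt_two_pow_self (n := k)
    exact_mod_cast this
  have h2 : R ^ (α * k + β - 1) = (R ^ α) ^ k * R ^ (β - 1) := by
    rw [← Real.rpow_natCast, ← Real.rpow_mul hR1.le, ← Real.rpow_add hR1]; ring_nf
  have h3 : R ^ (1 - β) * R ^ (β - 1) = 1 := by
    rw [← Real.rpow_add hR1]; simp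
  have h4 : Real.exp R * Real.exp (-R) = 1 := by rw [← Real.exp_add]; simp
  calc ((k:ℝ) + 1) * r ^ k ≤ 2 ^ k * r ^ k := by gcongr
    _ = (1/2) ^ k * (4 * r) ^ k := by
        rw [← mul_pow, ← mul_pow]; congr 1; ring
    _ ≤ (1/2) ^ k * (R ^ α) ^ k := by gcongr; linarith
    _ = (R ^ (1 - β) * Real.exp R * (1/2) ^ k) * (R ^ (α * k + β - 1) * Real.exp (-R)) := by
        rw [h2]
        have e : R ^ (1 - β) * Real.exp R * (1/2) ^ k * ((R ^ α) ^ k * R ^ (β - 1) * Real.exp (-R))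
          = (1/2) ^ k * (R ^ α) ^ k * (R ^ (1 - β) * R ^ (β - 1)) * (Real.exp R * Real.exp (-R)) := by
          ring
        rw [e, h3, h4]; ring
    _ ≤ _ := by gcongr

lemma cs_summable (α β r : ℝ) (hα : 0 < α) (hβ : 0 < β) (hr : 0 ≤ r) :
    Summable fun k : ℕ => r ^ k / Real.Gamma (α * k + β) := by
  refine Summable.of_nonneg_of_le (fun k => ?_) (fun k => ?_)
    (cs_summable_deriv α β r hα hβ hr)
  · have := cs_gpos α β hα hβ k; positivity
  · have := cs_gpos α β hα hβ k
    gcongr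
    have : 0 ≤ (k:ℝ) * r ^ k := by positivity
    linarith

lemma cs_summable' (α β z : ℝ) (hα : 0 < α) (hβ : 0 < β) :
    Summable fun k : ℕ => z ^ k / Real.Gamma (α * k + β) := by
  refine Summable.of_norm_bounded (cs_summable α β |z| hα hβ (abs_nonneg z)) (fun k => ?_)
  have := cs_gpos α β hα hβ k
  rw [norm_div, norm_pow, Real.norm_eq_abs, Real.norm_of_nonneg this.le]

/-- Termwise differentiation of the Mittag-Leffler series. -/
lemma cs_ml_hasDerivAt (α β z : ℝ) (hα : 0 < α) (hβ : 0 < β) :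
    HasDerivAt (ml α β) (∑' k : ℕ, (k:ℝ) * z ^ (k - 1) / Real.Gamma (α * k + β)) z := by
  set r := |z| + 1 with hrdef
  have hr : 1 ≤ r := by have := abs_nonneg z; linarith
  refine hasDerivAt_tsum_of_isPreconnected (t := Metric.ball (0:ℝ) r) (y₀ := z)
    (g := fun (k:ℕ) (z:ℝ) => z ^ k / Real.Gamma (α * k + β))
    (g' := fun (k:ℕ) (z:ℝ) => (k:ℝ) * z ^ (k - 1) / Real.Gamma (α * k + β))
    (cs_summable_deriv α β r hα hβ (by linarith)) Metric.isOpen_ball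
    (convex_ball _ _).isPreconnected ?_ ?_ ?_ ?_ ?_
  · intro k y _
    exact (hasDerivAt_pow k y).div_const _
  · intro k y hy
    have hg := cs_gpos α β hα hβ k
    have hy' : |y| ≤ r := by
      have := mem_ball_zero_iff.1 hy
      exact this.le
    rw [norm_div, norm_mul, norm_pow, Real.norm_of_nonneg hg.le, Real.norm_eq_abs y,
      Real.norm_of_nonneg (Nat.cast_nonneg k)]
    gcongr
    · linarith
    · calc |y| ^ (k-1) ≤ r ^ (k-1) := by gcongr
        _ ≤ r ^ k := pow_le_pow_right₀ hr (by omega)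
  · simp [hrdef]
  · exact cs_summable' α β z hα hβ
  · simp [hrdef]

lemma cs_ml_deriv_one (α z : ℝ) (hα : 0 < α) :
    HasDerivAt (ml α 1) (ml α α z / α) z := by
  have h := cs_ml_hasDerivAt α 1 z hα one_pos
  convert h using 1
  have hs : Summable fun k : ℕ => (k:ℝ) * z ^ (k - 1) / Real.Gamma (α * k + 1) := by
    refine Summable.of_norm_bounded (g := fun k : ℕ => ((k:ℝ) + 1) * (|z| + 1) ^ k / Real.Gamma (α * k + 1))
      (cs_summable_deriv α 1 (|z|+1) hα one_pos (by positivity)) (fun k => ?_)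
    have hg := cs_gpos α 1 hα one_pos k
    rw [norm_div, norm_mul, norm_pow, Real.norm_of_nonneg hg.le, Real.norm_eq_abs z,
      Real.norm_of_nonneg (Nat.cast_nonneg k)]
    have h0 := abs_nonneg z
    gcongr
    · linarith
    · calc |z| ^ (k-1) ≤ (|z|+1) ^ (k-1) := by gcongr; linarith
        _ ≤ (|z|+1) ^ k := pow_le_pow_right₀ (by linarith) (by omega)
  rw [hs.tsum_eq_zero_add]
  simp only [Nat.cast_zero, zero_mul, zero_div, zero_add, ml, ← tsum_div_const]
  congr 1
  ext k
  have hk : (α * ((k + 1 : ℕ) : ℝ)) ≠ 0 := by positivity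
  rw [Real.Gamma_add_one hk]
  have hg := cs_gpos α α hα hα k
  have : α * ((k + 1 : ℕ) : ℝ) = α * k + α := by push_cast; ring
  rw [this]
  have hk' : α * (k:ℝ) + α ≠ 0 := by positivity
  simp only [Nat.add_sub_cancel]
  push_cast
  field_simp

lemma cs_ml_continuous (α β : ℝ) (hα : 0 < α) (hβ : 0 < β) : Continuous (ml α β) :=
  continuous_iff_continuousAt.2 fun z => (cs_ml_hasDerivAt α β z hα hβ).continuousAt

lemma cs_ml_zero (α β : ℝ) : ml α β 0 = 1 / Real.Gamma β := by
  unfold ml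
  rw [tsum_eq_single 0]
  · simp
  · intro k hk; simp [hk]

/-- Real Beta integral. -/
lemma cs_beta (a b t : ℝ) (ha : 0 < a) (hb : 0 < b) (ht : 0 < t) :
    ∫ s in (0:ℝ)..t, s ^ (a - 1) * (t - s) ^ (b - 1)
      = t ^ (a + b - 1) * (Real.Gamma a * Real.Gamma b / Real.Gamma (a + b)) := by
  have h := Complex.betaIntegral_scaled (a:ℂ) (b:ℂ) ht
  have hG := Complex.betaIntegral_eq_Gamma_mul_div (a:ℂ) (b:ℂ) (by simpa) (by simpa)
  rw [hG] at h
  have h2 : (∫ x in (0:ℝ)..t, (x : ℂ) ^ ((a:ℂ) - 1) * ((t : ℂ) - x) ^ ((b:ℂ) - 1))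
      = ((∫ s in (0:ℝ)..t, s ^ (a - 1) * (t - s) ^ (b - 1) : ℝ) : ℂ) := by
    rw [← intervalIntegral.integral_ofReal]
    refine intervalIntegral.integral_congr ?_
    intro s hs
    rw [uIcc_of_le ht.le] at hs
    simp only
    rw [Complex.ofReal_mul, Complex.ofReal_cpow hs.1, Complex.ofReal_cpow (by linarith [hs.2])]
    push_cast
    rfl
  rw [h2] at h
  apply Complex.ofReal_injective
  rw [h]
  push_cast
  rw [Complex.ofReal_cpow ht.le, ← Complex.Gamma_ofReal, ← Complex.Gamma_ofReal,
    ← Complex.Gamma_ofReal]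
  push_cast
  rfl

lemma cs_beta_int (a b t : ℝ) (ha : 0 < a) (hb : 0 < b) (ht : 0 < t) :
    IntervalIntegrable (fun s : ℝ => s ^ (a - 1) * (t - s) ^ (b - 1)) volume 0 t := by
  by_contra h
  have h0 := intervalIntegral.integral_undef h
  rw [cs_beta a b t ha hb ht] at h0
  have h1 := Real.Gamma_pos_of_pos ha
  have h2 := Real.Gamma_pos_of_pos hb
  have h3 := Real.Gamma_pos_of_pos (add_pos ha hb)
  have : 0 < t ^ (a + b - 1) * (Real.Gamma a * Real.Gamma b / Real.Gamma (a + b)) := by positivity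
  linarith

/-- The (negated, normalized) derivative of `t ↦ E_α(-λ t^α)`. -/
noncomputable def csv (α m s : ℝ) : ℝ := s ^ (α - 1) * ml α α (-m * s ^ α)

lemma cs_int_v (α m γ t : ℝ) (hα : 0 < α) (hγ : 0 < γ) (ht : 0 < t) :
    IntervalIntegrable (fun s : ℝ => (t - s) ^ (γ - 1) * csv α m s) volume 0 t := by
  have h := (cs_beta_int α γ t hα hγ ht).mul_continuousOn
    (g := fun s => ml α α (-m * s ^ α)) (by
      apply Continuous.continuousOn
      exact (cs_ml_continuous α α hα hα).comp
        (continuous_const.mul (Real.continuous_rpow_const hα.le)))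
  refine h.congr ?_
  intro s _
  simp only [csv]; ring

/-- Fractional integral of `csv`. -/
lemma cs_frac (α m γ t : ℝ) (hα : 0 < α) (hm : 0 ≤ m) (hγ : 0 < γ) (ht : 0 < t) :
    ∫ s in (0:ℝ)..t, (t - s) ^ (γ - 1) * csv α m s
      = Real.Gamma γ * t ^ (α + γ - 1) * ml α (α + γ) (-m * t ^ α) := by
  have hsum := cs_summable α α (m * t ^ α) hα hα (by positivity)
  have key := intervalIntegral.hasSum_integral_of_dominated_convergence (μ := volume)
    (a := 0) (b := t)
    (F := fun (k:ℕ) (s:ℝ) => (t - s) ^ (γ - 1) *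
      (s ^ (α - 1) * ((-m * s ^ α) ^ k / Real.Gamma (α * k + α))))
    (f := fun s => (t - s) ^ (γ - 1) * csv α m s)
    (fun (k:ℕ) (s:ℝ) => (s ^ (α - 1) * (t - s) ^ (γ - 1)) *
      ((m * t ^ α) ^ k / Real.Gamma (α * k + α))) ?_ ?_ ?_ ?_ ?_
  · have h2 : HasSum (fun k : ℕ => Real.Gamma γ * t ^ (α + γ - 1) *
        ((-m * t ^ α) ^ k / Real.Gamma (α * k + (α + γ))))
        (Real.Gamma γ * t ^ (α + γ - 1) * ml α (α + γ) (-m * t ^ α)) :=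
      (cs_summable' α (α + γ) (-m * t ^ α) hα (by positivity)).hasSum.mul_left _
    rw [← h2.tsum_eq, ← key.tsum_eq]
    refine tsum_congr (fun k => ?_)
    have hg := cs_gpos α α hα hα k
    have hka : 0 < α * (k:ℝ) + α := by positivity
    have hb := cs_beta (α * k + α) γ t hka hγ ht
    have : ∫ s in (0:ℝ)..t, (t - s) ^ (γ - 1) *
      (s ^ (α - 1) * ((-m * s ^ α) ^ k / Real.Gamma (α * k + α)))
      = ∫ s in (0:ℝ)..t, ((-m) ^ k / Real.Gamma (α * k + α)) *
        (s ^ (α * k + α - 1) * (t - s) ^ (γ - 1)) := by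
      refine intervalIntegral.integral_congr_ae (Filter.Eventually.of_forall ?_)
      intro s hs
      rw [uIoc_of_le ht.le] at hs
      have hs0 : 0 < s := hs.1
      have : s ^ (α * k + α - 1) = (s ^ α) ^ k * s ^ (α - 1) := by
        rw [← Real.rpow_natCast, ← Real.rpow_mul hs0.le, ← Real.rpow_add hs0]; ring_nf
      rw [this, mul_pow]; ring
    rw [this, intervalIntegral.integral_const_mul, hb]
    have e1 : t ^ (α * k + α + γ - 1) = (t ^ α) ^ k * t ^ (α + γ - 1) := by
      rw [← Real.rpow_natCast, ← Real.rpow_mul ht.le, ← Real.rpow_add ht]; ring_nf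
    rw [e1, mul_pow, ← add_assoc (α * (k:ℝ)) α γ]
    field_simp
  · intro k
    apply Measurable.aestronglyMeasurable
    fun_prop
  · intro k
    refine Filter.Eventually.of_forall fun s hs => ?_
    rw [uIoc_of_le ht.le] at hs
    have hs0 : 0 < s := hs.1
    have hst : 0 ≤ t - s := by linarith [hs.2]
    have hg := cs_gpos α α hα hα k
    rw [norm_mul, norm_mul, norm_div, norm_pow, norm_mul, norm_neg, Real.norm_of_nonneg hm,
      Real.norm_of_nonneg (by positivity), Real.norm_of_nonneg (by positivity),
      Real.norm_of_nonneg hg.le, Real.norm_of_nonneg (by positivity : 0 ≤ s ^ α),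
      ← mul_assoc, mul_comm ((t - s) ^ (γ - 1))]
    gcongr
    exact hs.2
  · exact Filter.Eventually.of_forall fun s _ => hsum.mul_left _
  · simp only [tsum_mul_left]
    exact (cs_beta_int α γ t hα hγ ht).mul_const _
  · refine Filter.Eventually.of_forall fun s _ => ?_
    exact ((cs_summable' α α (-m * s ^ α) hα hα).hasSum.mul_left _).mul_left _

lemma cs_frac_nonneg_aux (α m γ t : ℝ) (hα : 0 < α) (hm : 0 ≤ m) (hγ : 0 < γ) (ht : 0 < t)
    (hv : ∀ s, 0 < s → 0 ≤ csv α m s) : 0 ≤ ml α (α + γ) (-m * t ^ α) := by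
  have h := cs_frac α m γ t hα hm hγ ht
  have h0 : 0 ≤ ∫ s in (0:ℝ)..t, (t - s) ^ (γ - 1) * csv α m s := by
    rw [intervalIntegral.integral_of_le ht.le]
    refine setIntegral_nonneg measurableSet_Ioc ?_
    intro s hs
    exact mul_nonneg (Real.rpow_nonneg (by linarith [hs.2]) _) (hv s hs.1)
  rw [h] at h0
  have hG := Real.Gamma_pos_of_pos hγ
  have hp : 0 < Real.Gamma γ * t ^ (α + γ - 1) := by positivity
  exact nonneg_of_mul_nonneg_right h0 hp

lemma cs_shift (α β z : ℝ) (hα : 0 < α) (hβ : 0 < β) :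
    ml α β z = 1 / Real.Gamma β + z * ml α (α + β) z := by
  unfold ml
  rw [(cs_summable' α β z hα hβ).tsum_eq_zero_add, ← tsum_mul_left]
  simp only [pow_zero, Nat.cast_zero, mul_zero, zero_add]
  congr 2
  ext k
  have : α * ((k + 1 : ℕ) : ℝ) + β = α * k + (α + β) := by push_cast; ring
  rw [this]; ring

lemma cs_W_hasDerivAt (α m t : ℝ) (hα : 0 < α) (ht : 0 < t) :
    HasDerivAt (fun t : ℝ => ml α 1 (-m * t ^ α)) (-m * csv α m t) t := by
  have h1 := cs_ml_deriv_one α (-m * t ^ α) hα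
  have h2 : HasDerivAt (fun t : ℝ => -m * t ^ α) (-m * (α * t ^ (α - 1))) t :=
    (Real.hasDerivAt_rpow_const (Or.inl ht.ne')).const_mul _
  have h3 := h1.comp t h2
  refine h3.congr_deriv ?_
  unfold csv
  field_simp

lemma cs_v_diff (α m t : ℝ) (hα : 0 < α) (ht : 0 < t) :
    DifferentiableAt ℝ (csv α m) t := by
  have h1 := cs_ml_hasDerivAt α α (-m * t ^ α) hα hα
  have h2 : HasDerivAt (fun t : ℝ => -m * t ^ α) (-m * (α * t ^ (α - 1))) t :=
    (Real.hasDerivAt_rpow_const (Or.inl ht.ne')).const_mul _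
  have h3 := h1.comp t h2
  have h4 : HasDerivAt (fun t : ℝ => t ^ (α - 1)) _ t :=
    (Real.hasDerivAt_rpow_const (Or.inl ht.ne'))
  exact (h4.mul h3).differentiableAt

lemma cs_frac_one_sub (α m t : ℝ) (hα : 0 < α) (hα1 : α < 1) (hm : 0 ≤ m) (ht : 0 < t) :
    ∫ s in (0:ℝ)..t, (t - s) ^ (-α) * csv α m s
      = Real.Gamma (1 - α) * ml α 1 (-m * t ^ α) := by
  have h := cs_frac α m (1 - α) t hα hm (by linarith) ht
  have e1 : (1 - α - 1) = -α := by ring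
  have e2 : α + (1 - α) - 1 = 0 := by ring
  have e3 : α + (1 - α) = 1 := by ring
  rw [e1, e2, e3, Real.rpow_zero, mul_one] at h
  exact h

lemma cs_int_v_one_sub (α m t : ℝ) (hα : 0 < α) (hα1 : α < 1) (ht : 0 < t) :
    IntervalIntegrable (fun s : ℝ => (t - s) ^ (-α) * csv α m s) volume 0 t := by
  have h := cs_int_v α m (1 - α) t hα (by linarith) ht
  have e1 : (1 - α - 1) = -α := by ring
  rwa [e1] at h

lemma cs_int_v_one (α m t : ℝ) (hα : 0 < α) (ht : 0 < t) :
    IntervalIntegrable (csv α m) volume 0 t := by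
  have h := cs_int_v α m 1 t hα one_pos ht
  simpa using h

lemma cs_rpow_mvt (α x y r : ℝ) (hα : 0 < α) (hx : 0 < x) (hxy : x < y) (hy : y ≤ r) :
    y ^ (-α) ≤ x ^ (-α) - α * r ^ (-α - 1) * (y - x) := by
  obtain ⟨z, hz, hz'⟩ := exists_hasDerivAt_eq_slope (fun z : ℝ => z ^ (-α))
    (fun z => -α * z ^ (-α - 1)) hxy
    (fun z hz => (Real.continuousAt_rpow_const _ _
      (Or.inl (by linarith [hz.1] : (0:ℝ) < z).ne')).continuousWithinAt)
    (fun z hz => Real.hasDerivAt_rpow_const (Or.inl (by linarith [hz.1] : (0:ℝ) < z).ne'))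
  have hz0 : 0 < z := hx.trans hz.1
  have hd : 0 < y - x := by linarith
  rw [eq_div_iff hd.ne'] at hz'
  have h1 : r ^ (-α - 1) ≤ z ^ (-α - 1) :=
    Real.rpow_le_rpow_of_nonpos hz0 (by linarith [hz.2]) (by linarith)
  have h2 : α * r ^ (-α - 1) * (y - x) ≤ α * z ^ (-α - 1) * (y - x) := by gcongr
  linarith

/-- Positivity of `E_{α,α}` on the negative axis. -/
lemma cs_pos (α m t : ℝ) (hα : 0 < α) (hα1 : α < 1) (hm : 0 < m) (ht : 0 < t) :
    0 < ml α α (-m * t ^ α) := by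
  by_contra hneg
  push Not at hneg
  set g : ℝ → ℝ := fun s => ml α α (-m * s ^ α) with hg
  have hgc : Continuous g := (cs_ml_continuous α α hα hα).comp
        (continuous_const.mul (Real.continuous_rpow_const hα.le))
  have hg0 : 0 < g 0 := by
    simp only [hg, Real.zero_rpow hα.ne', mul_zero, cs_ml_zero]
    have := Real.Gamma_pos_of_pos hα
    positivity
  have hcomp : IsCompact (Icc 0 t ∩ {s | g s ≤ 0}) :=
    isCompact_Icc.inter_right (isClosed_le hgc continuous_const)
  obtain ⟨t1, ⟨ht1I, ht1g⟩, hleast⟩ := hcomp.exists_isLeast ⟨t, ⟨ht.le, le_rfl⟩, hneg⟩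
  have ht1 : 0 < t1 := by
    rcases ht1I.1.eq_or_lt with h | h
    · rw [← h] at ht1g
      exact absurd ht1g (not_le.2 hg0)
    · exact h
  have hgpos : ∀ s, 0 ≤ s → s < t1 → 0 < g s := by
    intro s hs0 hs
    by_contra hcon
    have := hleast ⟨⟨hs0, hs.le.trans ht1I.2⟩, not_lt.1 hcon⟩
    linarith
  have hgt1 : g t1 = 0 := by
    refine le_antisymm ht1g ?_
    refine ge_of_tendsto ((hgc.tendsto t1).mono_left (nhdsWithin_le_nhds (s := Iio t1))) ?_
    filter_upwards [Ioo_mem_nhdsLT ht1] with s hs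
    exact (hgpos s hs.1.le hs.2).le
  have hvpos : ∀ s, 0 < s → s < t1 → 0 < csv α m s := fun s hs0 hs =>
    mul_pos (by positivity) (hgpos s hs0.le hs)
  have hvt1 : csv α m t1 = 0 := by
    have : csv α m t1 = t1 ^ (α - 1) * g t1 := rfl
    rw [this, hgt1, mul_zero]
  -- local Lipschitz bound
  obtain ⟨K, hK⟩ := (cs_v_diff α m t1 hα ht1).hasDerivAt.isBigO_sub.bound
  have hWd := cs_W_hasDerivAt α m t1 hα ht1
  rw [hvt1, mul_zero, hasDerivAt_iff_tendsto_slope] at hWd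
  have hWl := hWd.mono_left (nhdsWithin_mono t1 (s := Iio t1) (fun s hs => ne_of_lt hs))
  set a := t1 / 2 with ha
  have ha0 : 0 < a := by positivity
  have hat : a < t1 := by linarith
  set c0 := ∫ s in (0:ℝ)..a, csv α m s with hc0
  have hc0pos : 0 < c0 :=
    intervalIntegral.intervalIntegral_pos_of_pos_on (cs_int_v_one α m a hα ha0)
      (fun s hs => hvpos s hs.1 (hs.2.trans hat)) ha0
  set D := α * t1 ^ (-α - 1) with hD
  have hDpos : 0 < D := by positivity
  have hΓ : 0 < Real.Gamma (1 - α) := Real.Gamma_pos_of_pos (by linarith)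
  obtain ⟨δ, hδ, hball⟩ := Metric.eventually_nhds_iff.1 hK
  have hest : ∀ᶠ r in nhdsWithin t1 (Iio t1),
      Real.Gamma (1 - α) * slope (fun t : ℝ => ml α 1 (-m * t ^ α)) t1 r
        ≤ -(D * c0) + |K| * (t1 - r) ^ (1 - α) := by
    filter_upwards [Ioo_mem_nhdsLT (show max a (t1 - δ) < t1 from max_lt hat (by linarith))]
      with r hr
    have hra : a < r := (le_max_left _ _).trans_lt hr.1
    have hrδ : t1 - δ < r := (le_max_right _ _).trans_lt hr.1
    have hrt : r < t1 := hr.2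
    have hr0 : 0 < r := ha0.trans hra
    have hd : 0 < t1 - r := by linarith
    have J1 := cs_frac_one_sub α m t1 hα hα1 hm.le ht1
    have J2 := cs_frac_one_sub α m r hα hα1 hm.le hr0
    have I1 := cs_int_v_one_sub α m t1 hα hα1 ht1
    have I2 := cs_int_v_one_sub α m r hα hα1 hr0
    have Iv := cs_int_v_one α m r hα hr0
    have I1a : IntervalIntegrable (fun s : ℝ => (t1 - s) ^ (-α) * csv α m s) volume 0 r :=
      I1.mono_set (by
        rw [uIcc_of_le hr0.le, uIcc_of_le ht1.le]; exact Icc_subset_Icc le_rfl hrt.le)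
    have I1b : IntervalIntegrable (fun s : ℝ => (t1 - s) ^ (-α) * csv α m s) volume r t1 :=
      I1.mono_set (by
        rw [uIcc_of_le hrt.le, uIcc_of_le ht1.le]; exact Icc_subset_Icc hr0.le le_rfl)
    have hsplit := intervalIntegral.integral_add_adjacent_intervals I1a I1b
    have hE1 : ∫ s in (0:ℝ)..r, (t1 - s) ^ (-α) * csv α m s
        ≤ ∫ s in (0:ℝ)..r, ((r - s) ^ (-α) * csv α m s - D * (t1 - r) * csv α m s) := by
      refine intervalIntegral.integral_mono_on_of_le_Ioo hr0.le I1a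
        (I2.sub (Iv.const_mul _)) ?_
      intro s hs
      have h := cs_rpow_mvt α (r - s) (t1 - s) t1 hα (by linarith [hs.2]) (by linarith)
        (by linarith [hs.1])
      have hv := hvpos s hs.1 (hs.2.trans hrt)
      have := mul_le_mul_of_nonneg_right h hv.le
      have e : t1 - s - (r - s) = t1 - r := by ring
      rw [e] at this
      rw [hD]
      linarith
    rw [intervalIntegral.integral_sub I2 (Iv.const_mul _), intervalIntegral.integral_const_mul,
      J2] at hE1
    have hc : c0 ≤ ∫ s in (0:ℝ)..r, csv α m s := by
      refine intervalIntegral.integral_mono_interval le_rfl ha0.le hra.le ?_ Iv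
      filter_upwards [ae_restrict_mem measurableSet_Ioc] with s hs
      exact (hvpos s hs.1 (hs.2.trans_lt hrt)).le
    have hE2 : ∫ s in r..t1, (t1 - s) ^ (-α) * csv α m s
        ≤ ∫ s in r..t1, |K| * (t1 - r) ^ (1 - α) := by
      refine intervalIntegral.integral_mono_on_of_le_Ioo hrt.le I1b
        intervalIntegrable_const ?_
      intro s hs
      have hs1 : 0 < t1 - s := by linarith [hs.2]
      have hb := hball (y := s) (by
        rw [Real.dist_eq, abs_lt]; constructor <;> linarith [hs.1, hs.2])
      rw [hvt1, sub_zero, Real.norm_eq_abs, Real.norm_eq_abs, abs_sub_comm,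
        abs_of_pos hs1] at hb
      have hb' : csv α m s ≤ |K| * (t1 - s) :=
        (le_abs_self _).trans (hb.trans (by gcongr; exact le_abs_self K))
      calc (t1 - s) ^ (-α) * csv α m s ≤ (t1 - s) ^ (-α) * (|K| * (t1 - s)) := by gcongr
        _ = |K| * (t1 - s) ^ (1 - α) := by
            have : (t1 - s) ^ (1 - α) = (t1 - s) * (t1 - s) ^ (-α) := by
              rw [sub_eq_add_neg 1 α, Real.rpow_add hs1, Real.rpow_one]
            rw [this]; ring
        _ ≤ |K| * (t1 - r) ^ (1 - α) := by
            gcongr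
            exact hs.1.le
    rw [intervalIntegral.integral_const, smul_eq_mul] at hE2
    have hc' : D * (t1 - r) * c0 ≤ D * (t1 - r) * ∫ s in (0:ℝ)..r, csv α m s := by gcongr
    rw [slope_def_field, mul_div_assoc', div_le_iff_of_neg (by linarith)]
    rw [← hsplit] at J1
    nlinarith [J1, hE1, hE2, hc']
  have hlim : Tendsto (fun r => -(D * c0) + |K| * (t1 - r) ^ (1 - α)) (nhdsWithin t1 (Iio t1))
      (nhds (-(D * c0) + |K| * (t1 - t1) ^ (1 - α))) := by
    refine Tendsto.mono_left ?_ nhdsWithin_le_nhds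
    refine Continuous.tendsto (f := fun r => -(D * c0) + |K| * (t1 - r) ^ (1 - α)) ?_ t1
    refine continuous_const.add (continuous_const.mul ?_)
    exact (Real.continuous_rpow_const (by linarith)).comp (continuous_const.sub continuous_id)
  have := le_of_tendsto_of_tendsto (hWl.const_mul (Real.Gamma (1 - α))) hlim hest
  rw [sub_self, Real.zero_rpow (by linarith)] at this
  have : 0 < D * c0 := by positivity
  linarith

lemma cs_v_nonneg (α m : ℝ) (hα : 0 < α) (hα1 : α < 1) (hm : 0 < m) (s : ℝ) (hs : 0 < s) :
    0 ≤ csv α m s :=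
  mul_nonneg (by positivity) (cs_pos α m s hα hα1 hm hs).le

lemma cs_v_le (α m : ℝ) (hα : 0 < α) (hα1 : α < 1) (hm : 0 < m) (s : ℝ) (hs : 0 < s) :
    csv α m s ≤ s ^ (α - 1) / Real.Gamma α := by
  have h := cs_frac_nonneg_aux α m α s hα hm.le hα hs (cs_v_nonneg α m hα hα1 hm)
  have h2 := cs_shift α α (-m * s ^ α) hα hα
  unfold csv
  rw [div_eq_mul_one_div]
  gcongr
  have : 0 ≤ m * s ^ α * ml α (α + α) (-m * s ^ α) := by positivity
  linarith

lemma cs_W_nonneg (α m t : ℝ) (hα : 0 < α) (hα1 : α < 1) (hm : 0 < m) (ht : 0 ≤ t) :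
    0 ≤ ml α 1 (-m * t ^ α) := by
  rcases ht.eq_or_lt with h | h
  · rw [← h, Real.zero_rpow hα.ne', mul_zero, cs_ml_zero]; simp
  · have := cs_frac_nonneg_aux α m (1 - α) t hα hm.le (by linarith) h
      (cs_v_nonneg α m hα hα1 hm)
    rwa [add_sub_cancel] at this

lemma cs_W_le (α m t : ℝ) (hα : 0 < α) (hα1 : α < 1) (hm : 0 < m) (ht : 0 ≤ t) :
    ml α 1 (-m * t ^ α) ≤ 1 := by
  rcases ht.eq_or_lt with h | h
  · rw [← h, Real.zero_rpow hα.ne', mul_zero, cs_ml_zero]; simp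
  · have := cs_frac_nonneg_aux α m 1 t hα hm.le one_pos h
      (cs_v_nonneg α m hα hα1 hm)
    rw [cs_shift α 1 _ hα one_pos]
    have : 0 ≤ m * t ^ α * ml α (α + 1) (-m * t ^ α) := by positivity
    simp only [Real.Gamma_one]
    linarith

lemma cs_W_abs (α m t : ℝ) (hα : 0 < α) (hα1 : α < 1) (hm : 0 < m) (ht : 0 ≤ t) :
    |ml α 1 (-m * t ^ α)| ≤ 1 :=
  abs_le.2 ⟨by linarith [cs_W_nonneg α m t hα hα1 hm ht], cs_W_le α m t hα hα1 hm ht⟩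

lemma cs_W_cont (α m : ℝ) (hα : 0 < α) : Continuous fun t : ℝ => ml α 1 (-m * t ^ α) :=
  (cs_ml_continuous α 1 hα one_pos).comp
        (continuous_const.mul (Real.continuous_rpow_const hα.le))

/-- Uniform convergence of a dominated series. -/
lemma cs_unif {ι : Type*} (S : Set ι) (h Q : ℕ → ι → ℝ) (B : ℕ → ℝ) (G : ι → ℝ)
    (hB : Summable B)
    (hQ : TendstoUniformlyOn (fun N z => ∑ i ∈ Finset.range N, Q i z) G atTop S)
    (hQ0 : ∀ i, ∀ z ∈ S, 0 ≤ Q i z) (hh : ∀ i, ∀ z ∈ S, |h i z| ≤ B i + Q i z) :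
    (∀ z ∈ S, Summable fun i => h i z) ∧
    TendstoUniformlyOn (fun N z => ∑ i ∈ Finset.range N, h i z) (fun z => ∑' i, h i z) atTop S := by
  have hQs : ∀ z ∈ S, HasSum (fun i => Q i z) (G z) := fun z hz =>
    (hasSum_iff_tendsto_nat_of_nonneg (fun i => hQ0 i z hz) _).2 (hQ.tendsto_at hz)
  have hs : ∀ z ∈ S, Summable fun i => h i z := fun z hz =>
    Summable.of_norm_bounded (hB.add (hQs z hz).summable) (fun i => hh i z hz)
  refine ⟨hs, ?_⟩
  rw [Metric.tendstoUniformlyOn_iff] at hQ ⊢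
  intro ε hε
  have hB' := Metric.tendsto_atTop.1 hB.hasSum.tendsto_sum_nat (ε / 2) (by positivity)
  obtain ⟨N0, hN0⟩ := hB'
  filter_upwards [hQ (ε / 2) (by positivity), eventually_ge_atTop N0] with N hN hNN z hz
  have h1 := hN z hz
  have h2 := hN0 N hNN
  rw [Real.dist_eq] at h1 h2 ⊢
  have t1 := (hs z hz).sum_add_tsum_nat_add N
  have t2 := hB.sum_add_tsum_nat_add N
  have t3 := (hQs z hz).summable.sum_add_tsum_nat_add N
  rw [(hQs z hz).tsum_eq] at t3
  have sB := (summable_nat_add_iff N).2 hB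
  have sQ := (summable_nat_add_iff N).2 (hQs z hz).summable
  have t4 : ‖∑' i, h (i + N) z‖ ≤ ∑' i, (B (i + N) + Q (i + N) z) :=
    tsum_of_norm_bounded (sB.add sQ).hasSum (fun i => hh (i + N) z hz)
  rw [sB.tsum_add sQ, Real.norm_eq_abs] at t4
  have t5 : ∑' i, h i z - ∑ i ∈ Finset.range N, h i z = ∑' i, h (i + N) z := by linarith
  rw [t5]
  have a1 := (abs_lt.1 h1)
  have a2 := (abs_lt.1 h2)
  linarith

lemma cs_amgm (m c e Y : ℝ) (hm : 0 < m) (he : |e| ≤ |c|) : |e * Y| ≤ m * c ^ 2 + Y ^ 2 / m := by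
  rw [abs_mul]
  have h1 : |e| * |Y| ≤ |c| * |Y| := by gcongr
  refine h1.trans ?_
  rw [← sq_abs c, ← sq_abs Y]
  have : m * |c| ^ 2 + |Y| ^ 2 / m - |c| * |Y|
      = ((m * |c| - |Y|) ^ 2 + (m * |c|) * |Y|) / m := by field_simp; ring
  have : 0 ≤ m * |c| ^ 2 + |Y| ^ 2 / m - |c| * |Y| := by rw [this]; positivity
  linarith

lemma cs_coef {l : ℝ} {p q : ℝ → ℝ} {lam : ℕ → ℝ} {X : ℕ → ℝ → ℝ}
    (hSL : SturmLiouvilleData l p q lam X)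
    (c : ℕ → ℝ) (hc : Summable fun i => lam i ^ 4 * c i ^ 2) (k : ℕ) (hk : k ≤ 4) :
    Summable fun i => lam i ^ k * c i ^ 2 := by
  refine Summable.of_norm_bounded_eventually_nat hc ?_
  filter_upwards [hSL.hlamtop.eventually_ge_atTop 1] with i hi
  have := hSL.hlam i
  rw [Real.norm_of_nonneg (by positivity)]
  gcongr

lemma cs_X_deriv {l : ℝ} {p q : ℝ → ℝ} {lam : ℕ → ℝ} {X : ℕ → ℝ → ℝ}
    (hSL : SturmLiouvilleData l p q lam X) (i : ℕ) :
    (∀ x ∈ Ioo (0:ℝ) l, HasDerivAt (X i) (deriv (X i) x) x) ∧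
    (∀ x ∈ Ioo (0:ℝ) l, HasDerivAt (deriv (X i)) (deriv (deriv (X i)) x) x) ∧
    ContinuousOn (deriv (deriv (X i))) (Ioo 0 l) := by
  have h : ContDiffOn ℝ (1 + 1) (X i) (Ioo 0 l) := by
    have := (hSL.hX i).mono Ioo_subset_Icc_self
    rwa [show (2 : WithTop ℕ∞) = 1 + 1 by norm_num] at this
  rw [contDiffOn_succ_iff_deriv_of_isOpen isOpen_Ioo] at h
  obtain ⟨h1, -, h2⟩ := h
  have h2' : ContDiffOn ℝ (0 + 1) (deriv (X i)) (Ioo 0 l) := by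
    rwa [zero_add]
  rw [contDiffOn_succ_iff_deriv_of_isOpen isOpen_Ioo] at h2'
  obtain ⟨h3, -, h4⟩ := h2'
  exact ⟨fun x hx => (h1.differentiableAt (isOpen_Ioo.mem_nhds hx)).hasDerivAt,
    fun x hx => (h3.differentiableAt (isOpen_Ioo.mem_nhds hx)).hasDerivAt, h4.continuousOn⟩

lemma cs_spatial {l : ℝ} {p q : ℝ → ℝ} {lam : ℕ → ℝ} {X : ℕ → ℝ → ℝ}
    (hSL : SturmLiouvilleData l p q lam X)
    (c : ℕ → ℝ) (hc : Summable fun i => lam i ^ 4 * c i ^ 2) (e : ℕ → ℝ)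
    (he : ∀ i, |e i| ≤ |c i|) :
    (∀ x ∈ Ioo (0:ℝ) l, Summable fun i => e i * X i x) ∧
    (∀ x ∈ Ioo (0:ℝ) l, Summable fun i => e i * deriv (X i) x) ∧
    (∀ x ∈ Ioo (0:ℝ) l, Summable fun i => e i * deriv (deriv (X i)) x) ∧
    (∀ x ∈ Ioo (0:ℝ) l, HasDerivAt (fun y => ∑' i, e i * X i y)
      (∑' i, e i * deriv (X i) x) x) ∧
    (∀ x ∈ Ioo (0:ℝ) l, HasDerivAt (fun y => ∑' i, e i * deriv (X i) y)
      (∑' i, e i * deriv (deriv (X i)) x) x) ∧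
    ContinuousOn (fun y => ∑' i, e i * deriv (deriv (X i)) y) (Ioo 0 l) := by
  have hl := hSL.hlam
  obtain ⟨g1, hg1⟩ := hSL.hser1
  obtain ⟨g2, hg2⟩ := hSL.hser2
  obtain ⟨g3, hg3⟩ := hSL.hser3
  have sub : Ioo (0:ℝ) l ⊆ Icc 0 l := Ioo_subset_Icc_self
  obtain ⟨s1, u1⟩ := cs_unif (Ioo (0:ℝ) l) (fun i x => e i * X i x)
    (fun i x => X i x ^ 2 / lam i) (fun i => lam i ^ 1 * c i ^ 2) g1
    (cs_coef hSL c hc 1 (by norm_num)) (hg1.mono sub)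
    (fun i z _ => by have := hl i; positivity)
    (fun i z _ => by rw [pow_one]; exact cs_amgm _ _ _ _ (hl i) (he i))
  obtain ⟨s2, u2⟩ := cs_unif (Ioo (0:ℝ) l) (fun i x => e i * deriv (X i) x)
    (fun i x => deriv (X i) x ^ 2 / lam i ^ 2) (fun i => lam i ^ 2 * c i ^ 2) g2
    (cs_coef hSL c hc 2 (by norm_num)) (hg2.mono sub)
    (fun i z _ => by have := hl i; positivity)
    (fun i z _ => cs_amgm _ _ _ _ (pow_pos (hl i) 2) (he i))
  obtain ⟨s3, u3⟩ := cs_unif (Ioo (0:ℝ) l) (fun i x => e i * deriv (deriv (X i)) x)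
    (fun i x => deriv (deriv (X i)) x ^ 2 / lam i ^ 3) (fun i => lam i ^ 3 * c i ^ 2) g3
    (cs_coef hSL c hc 3 (by norm_num)) (hg3.mono sub)
    (fun i z _ => by have := hl i; positivity)
    (fun i z _ => cs_amgm _ _ _ _ (pow_pos (hl i) 3) (he i))
  refine ⟨s1, s2, s3, ?_, ?_, ?_⟩
  · intro x hx
    refine hasDerivAt_of_tendstoUniformlyOn isOpen_Ioo u2 (Filter.Eventually.of_forall ?_)
      (fun y hy => u1.tendsto_at hy) hx
    intro N y hy
    exact HasDerivAt.fun_sum fun i _ => ((cs_X_deriv hSL i).1 y hy).const_mul _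
  · intro x hx
    refine hasDerivAt_of_tendstoUniformlyOn isOpen_Ioo u3 (Filter.Eventually.of_forall ?_)
      (fun y hy => u2.tendsto_at hy) hx
    intro N y hy
    exact HasDerivAt.fun_sum fun i _ => ((cs_X_deriv hSL i).2.1 y hy).const_mul _
  · refine u3.continuousOn (Filter.Frequently.of_forall fun N => ?_)
    exact continuousOn_finsetSum _ fun i _ => continuousOn_const.mul (cs_X_deriv hSL i).2.2

lemma cs_abs_summable {l : ℝ} {p q : ℝ → ℝ} {lam : ℕ → ℝ} {X : ℕ → ℝ → ℝ}
    (hSL : SturmLiouvilleData l p q lam X)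
    (c : ℕ → ℝ) (hc : Summable fun i => lam i ^ 4 * c i ^ 2) (x : ℝ) (hx : x ∈ Icc 0 l) :
    (Summable fun i => |c i * X i x|) ∧ Summable fun i => |c i * lam i * X i x| := by
  obtain ⟨g1, hg1⟩ := hSL.hser1
  have hs : Summable fun i => X i x ^ 2 / lam i :=
    ((hasSum_iff_tendsto_nat_of_nonneg
      (fun i => by have := hSL.hlam i; positivity) _).2 (hg1.tendsto_at hx)).summable
  constructor
  · refine Summable.of_nonneg_of_le (fun i => abs_nonneg _) (fun i => ?_)
      ((cs_coef hSL c hc 1 (by norm_num)).add hs)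
    rw [pow_one]; exact cs_amgm _ _ _ _ (hSL.hlam i) le_rfl
  · refine Summable.of_nonneg_of_le (fun i => abs_nonneg _) (fun i => ?_)
      ((cs_coef hSL c hc 3 (by norm_num)).add hs)
    refine (cs_amgm (lam i) _ _ _ (hSL.hlam i) le_rfl).trans (le_of_eq ?_)
    ring

lemma cs_time_deriv (α : ℝ) (hα : 0 < α) (hα1 : α < 1) (lam c Y : ℕ → ℝ)
    (hlam : ∀ i, 0 < lam i) (h0 : Summable fun i => |c i * Y i|)
    (h1 : Summable fun i => |c i * lam i * Y i|) (s : ℝ) (hs : 0 < s) :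
    HasDerivAt (fun t => ∑' i, c i * ml α 1 (-lam i * t ^ α) * Y i)
      (∑' i, -(c i * lam i * Y i) * csv α (lam i) s) s := by
  have hs2 : 0 < s / 2 := by positivity
  have hG := Real.Gamma_pos_of_pos hα
  refine hasDerivAt_tsum_of_isPreconnected (t := Ioi (s / 2)) (y₀ := s)
    (u := fun i => |c i * lam i * Y i| * ((s / 2) ^ (α - 1) / Real.Gamma α))
    (g := fun i t => c i * ml α 1 (-lam i * t ^ α) * Y i)
    (g' := fun i t => -(c i * lam i * Y i) * csv α (lam i) t)
    (h1.mul_right _) isOpen_Ioi isPreconnected_Ioi ?_ ?_ ?_ ?_ ?_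
  · intro i t ht
    have ht0 : 0 < t := hs2.trans ht
    refine (((cs_W_hasDerivAt α (lam i) t hα ht0).const_mul (c i)).mul_const (Y i)).congr_deriv ?_
    ring
  · intro i t ht
    have ht0 : 0 < t := hs2.trans ht
    rw [norm_mul, norm_neg, Real.norm_eq_abs, Real.norm_of_nonneg
      (cs_v_nonneg α (lam i) hα hα1 (hlam i) t ht0)]
    gcongr
    refine (cs_v_le α (lam i) hα hα1 (hlam i) t ht0).trans ?_
    have h5 : t ^ (α - 1) ≤ (s / 2) ^ (α - 1) :=
      Real.rpow_le_rpow_of_nonpos hs2 (le_of_lt ht) (by linarith)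
    gcongr
  · simp [hs]
  · refine Summable.of_norm_bounded h0 (fun i => ?_)
    have := cs_W_abs α (lam i) s hα hα1 (hlam i) hs.le
    rw [Real.norm_eq_abs, mul_right_comm, abs_mul]
    exact mul_le_of_le_one_right (abs_nonneg _) this
  · simp [hs]

lemma cs_caputo (α : ℝ) (hα : 0 < α) (hα1 : α < 1) (lam c Y : ℕ → ℝ)
    (hlam : ∀ i, 0 < lam i) (h0 : Summable fun i => |c i * Y i|)
    (h1 : Summable fun i => |c i * lam i * Y i|) (t : ℝ) (ht : 0 < t) :
    IntervalIntegrable (fun s => (t - s) ^ (-α) *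
      deriv (fun t => ∑' i, c i * ml α 1 (-lam i * t ^ α) * Y i) s) volume 0 t ∧
    caputo α (fun t => ∑' i, c i * ml α 1 (-lam i * t ^ α) * Y i) t
      = -∑' i, c i * lam i * ml α 1 (-lam i * t ^ α) * Y i := by
  set U : ℝ → ℝ := fun t => ∑' i, c i * ml α 1 (-lam i * t ^ α) * Y i with hU
  have hG := Real.Gamma_pos_of_pos hα
  have hG1 : 0 < Real.Gamma (1 - α) := Real.Gamma_pos_of_pos (by linarith)
  have hd : ∀ s, 0 < s → deriv U s = ∑' i, -(c i * lam i * Y i) * csv α (lam i) s :=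
    fun s hs => (cs_time_deriv α hα hα1 lam c Y hlam h0 h1 s hs).deriv
  have hbeta := cs_beta_int α (1 - α) t hα (by linarith) ht
  rw [show (1 - α - 1) = -α by ring] at hbeta
  have hbound : ∀ i, ∀ s ∈ Ioc 0 t, ‖(t - s) ^ (-α) * (-(c i * lam i * Y i) * csv α (lam i) s)‖
      ≤ |c i * lam i * Y i| * (s ^ (α - 1) * (t - s) ^ (-α) / Real.Gamma α) := by
    intro i s hs
    have hts : 0 ≤ t - s := by linarith [hs.2]
    rw [norm_mul, norm_mul, norm_neg, Real.norm_of_nonneg (Real.rpow_nonneg hts _),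
      Real.norm_eq_abs, Real.norm_of_nonneg (cs_v_nonneg α (lam i) hα hα1 (hlam i) s hs.1)]
    have h2 := cs_v_le α (lam i) hα hα1 (hlam i) s hs.1
    calc (t - s) ^ (-α) * (|c i * lam i * Y i| * csv α (lam i) s)
        ≤ (t - s) ^ (-α) * (|c i * lam i * Y i| * (s ^ (α - 1) / Real.Gamma α)) := by gcongr
      _ = _ := by ring
  have hsum : ∀ s ∈ Ioc 0 t, HasSum (fun i => (t - s) ^ (-α) *
      (-(c i * lam i * Y i) * csv α (lam i) s)) ((t - s) ^ (-α) * deriv U s) := by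
    intro s hs
    rw [hd s hs.1, ← tsum_mul_left]
    refine Summable.hasSum ?_
    exact Summable.of_norm_bounded (h1.mul_right _) (fun i => hbound i s hs)
  constructor
  · refine IntervalIntegrable.mono_fun
      ((hbeta.div_const (Real.Gamma α)).const_mul (∑' i, |c i * lam i * Y i|)) ?_ ?_
    · apply Measurable.aestronglyMeasurable
      exact (by fun_prop : Measurable fun s : ℝ => (t - s) ^ (-α)).mul (measurable_deriv U)
    · rw [uIoc_of_le ht.le]
      filter_upwards [ae_restrict_mem measurableSet_Ioc] with s hs
      rw [← (hsum s hs).tsum_eq]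
      have := tsum_of_norm_bounded (h1.hasSum.mul_right _) (fun i => hbound i s hs)
      exact this.trans (le_abs_self _)
  · have key := intervalIntegral.hasSum_integral_of_dominated_convergence (μ := volume)
      (a := 0) (b := t)
      (F := fun (i:ℕ) (s:ℝ) => (t - s) ^ (-α) * (-(c i * lam i * Y i) * csv α (lam i) s))
      (f := fun s => (t - s) ^ (-α) * deriv U s)
      (fun (i:ℕ) (s:ℝ) => |c i * lam i * Y i| * (s ^ (α - 1) * (t - s) ^ (-α) / Real.Gamma α))
      ?_ ?_ ?_ ?_ ?_
    · have hterm : ∀ i, ∫ s in (0:ℝ)..t, (t - s) ^ (-α) *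
          (-(c i * lam i * Y i) * csv α (lam i) s)
          = Real.Gamma (1 - α) * -(c i * lam i * ml α 1 (-lam i * t ^ α) * Y i) := by
        intro i
        have := cs_frac_one_sub α (lam i) t hα hα1 (hlam i).le ht
        rw [show (fun s => (t - s) ^ (-α) * (-(c i * lam i * Y i) * csv α (lam i) s))
          = fun s => -(c i * lam i * Y i) * ((t - s) ^ (-α) * csv α (lam i) s) by
            funext s; ring]
        rw [intervalIntegral.integral_const_mul, this]
        ring
      have h3 := key.tsum_eq
      simp only [hterm] at h3
      rw [tsum_mul_left, tsum_neg] at h3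
      unfold caputo
      rw [← h3, ← mul_assoc, one_div_mul_cancel hG1.ne', one_mul]
    · intro i
      have := (cs_int_v_one_sub α (lam i) t hα hα1 ht).const_mul (-(c i * lam i * Y i))
      have h4 := this.aestronglyMeasurable
      rw [uIoc_of_le ht.le]
      refine h4.congr (Filter.Eventually.of_forall fun s => ?_)
      simp only
      ring
    · intro i
      refine Filter.Eventually.of_forall fun s hs => ?_
      rw [uIoc_of_le ht.le] at hs
      exact hbound i s hs
    · exact Filter.Eventually.of_forall fun s _ => h1.mul_right _
    · simp only [tsum_mul_right]
      exact (hbeta.div_const _).const_mul _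
    · refine Filter.Eventually.of_forall fun s hs => ?_
      rw [uIoc_of_le ht.le] at hs
      exact hsum s hs

/-- classical solvability in 1D, Theorem 5: with Sturm–Liouville
eigendata `(λ_i, X_i)` on `[0,l]`, coefficients `(c_i)` with `∑ λ_i⁴ c_i² < ∞` and
`u₀ = ∑ c_i X_i` converging uniformly on `[0,l]`, the series
`u(x,t) = ∑ c_i E_α(−λ_i t^α) X_i(x)` converges uniformly on `[0,l]×[0,T]` to a
continuous function satisfying the initial condition, the zero Dirichlet boundary
conditions, the stated spatial and Caputo time differentiability with the
term-by-term formulas, and the one-dimensional time-fractional diffusion equation. -/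
theorem classical_solvability_1d (α T l : ℝ) (hα : 0 < α) (hα1 : α < 1) (hT : 0 < T)
    (p q : ℝ → ℝ) (lam : ℕ → ℝ) (X : ℕ → ℝ → ℝ)
    (hSL : SturmLiouvilleData l p q lam X)
    (c : ℕ → ℝ) (hc : Summable fun i => lam i ^ 4 * c i ^ 2)
    (u₀ : ℝ → ℝ)
    (hu₀ : TendstoUniformlyOn (fun N x => ∑ i ∈ Finset.range N, c i * X i x) u₀
      Filter.atTop (Set.Icc 0 l)) :
    let u : ℝ → ℝ → ℝ := fun x t => ∑' i, c i * ml α 1 (-lam i * t ^ α) * X i x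
    -- the series converges uniformly on [0,l]×[0,T] to u, which is continuous
    (TendstoUniformlyOn
      (fun N (z : ℝ × ℝ) => ∑ i ∈ Finset.range N, c i * ml α 1 (-lam i * z.2 ^ α) * X i z.1)
      (fun z : ℝ × ℝ => u z.1 z.2) Filter.atTop (Set.Icc 0 l ×ˢ Set.Icc 0 T)) ∧
    ContinuousOn (fun z : ℝ × ℝ => u z.1 z.2) (Set.Icc 0 l ×ˢ Set.Icc 0 T) ∧
    -- initial condition
    (∀ x ∈ Set.Icc (0:ℝ) l, u x 0 = u₀ x) ∧
    -- boundary conditions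
    (∀ t ∈ Set.Icc (0:ℝ) T, u 0 t = 0 ∧ u l t = 0) ∧
    -- spatial regularity and term-by-term second derivative
    (∀ t ∈ Set.Ioo (0:ℝ) T, ContDiffOn ℝ 2 (fun x => u x t) (Set.Ioo 0 l) ∧
      ∀ x ∈ Set.Ioo (0:ℝ) l, deriv (deriv (fun y => u y t)) x
        = ∑' i, c i * ml α 1 (-lam i * t ^ α) * deriv (deriv (X i)) x) ∧
    -- existence of the Caputo derivative in time and the term-by-term formula
    (∀ x ∈ Set.Ioo (0:ℝ) l, ∀ t ∈ Set.Ioo (0:ℝ) T,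
      IntervalIntegrable (fun s => (t - s) ^ (-α) * deriv (u x) s)
        MeasureTheory.volume 0 t ∧
      caputo α (u x) t = -∑' i, c i * lam i * ml α 1 (-lam i * t ^ α) * X i x) ∧
    -- the time-fractional diffusion equation
    (∀ x ∈ Set.Ioo (0:ℝ) l, ∀ t ∈ Set.Ioo (0:ℝ) T,
      caputo α (u x) t
        = deriv (fun y => p y * deriv (fun z => u z t) y) x - q x * u x t) := by

  intro u
  have hlam := hSL.hlam
  have hl0 := hSL.hl
  obtain ⟨g1, hg1⟩ := hSL.hser1
  have hE : ∀ t, 0 ≤ t → ∀ i, |c i * ml α 1 (-lam i * t ^ α)| ≤ |c i| := by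
    intro t ht i
    rw [abs_mul]
    exact mul_le_of_le_one_right (abs_nonneg _) (cs_W_abs α (lam i) t hα hα1 (hlam i) ht)
  have hUnif := (cs_unif (Set.Icc 0 l ×ˢ Set.Icc 0 T)
    (fun i (z : ℝ × ℝ) => c i * ml α 1 (-lam i * z.2 ^ α) * X i z.1)
    (fun i z => X i z.1 ^ 2 / lam i) (fun i => lam i ^ 1 * c i ^ 2) (fun z => g1 z.1)
    (cs_coef hSL c hc 1 (by norm_num))
    ((hg1.comp (Prod.fst : ℝ × ℝ → ℝ)).mono (fun z hz => hz.1))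
    (fun i z _ => by have := hlam i; positivity)
    (fun i z hz => by
      rw [pow_one]; exact cs_amgm _ _ _ _ (hlam i) (hE z.2 hz.2.1 i))).2
  have hCap : ∀ x ∈ Set.Ioo (0:ℝ) l, ∀ t ∈ Set.Ioo (0:ℝ) T,
      IntervalIntegrable (fun s => (t - s) ^ (-α) * deriv (u x) s)
        MeasureTheory.volume 0 t ∧
      caputo α (u x) t = -∑' i, c i * lam i * ml α 1 (-lam i * t ^ α) * X i x := by
    intro x hx t ht
    obtain ⟨a0, a1⟩ := cs_abs_summable hSL c hc x (Ioo_subset_Icc_self hx)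
    exact cs_caputo α hα hα1 lam c (fun i => X i x) hlam a0 a1 t ht.1
  refine ⟨hUnif, ?_, ?_, ?_, ?_, hCap, ?_⟩
  · refine hUnif.continuousOn (Filter.Frequently.of_forall fun N => ?_)
    refine continuousOn_finsetSum _ fun i _ => ContinuousOn.mul ?_ ?_
    · exact (continuous_const.mul ((cs_W_cont α (lam i) hα).comp continuous_snd)).continuousOn
    · exact (hSL.hX i).continuousOn.comp continuous_fst.continuousOn (fun z hz => hz.1)
  · intro x hx
    have h1 : u x 0 = ∑' i, c i * X i x := by
      simp only [u, Real.zero_rpow hα.ne', mul_zero, cs_ml_zero, Real.Gamma_one, div_one, mul_one]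
    rw [h1]
    exact tendsto_nhds_unique
      (cs_abs_summable hSL c hc x hx).1.of_abs.hasSum.tendsto_sum_nat (hu₀.tendsto_at hx)
  · intro t _
    simp [u, hSL.hbc0, hSL.hbcl]
  · intro t ht
    obtain ⟨-, -, -, d1, d2, c2⟩ := cs_spatial hSL c hc
      (fun i => c i * ml α 1 (-lam i * t ^ α)) (hE t ht.1.le)
    have e1 : ∀ x ∈ Set.Ioo (0:ℝ) l, deriv (fun y => u y t) x
        = ∑' i, c i * ml α 1 (-lam i * t ^ α) * deriv (X i) x := fun x hx => (d1 x hx).deriv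
    have e2 : ∀ x ∈ Set.Ioo (0:ℝ) l, HasDerivAt (deriv (fun y => u y t))
        (∑' i, c i * ml α 1 (-lam i * t ^ α) * deriv (deriv (X i)) x) x := fun x hx =>
      (d2 x hx).congr_of_eventuallyEq
        (Filter.eventuallyEq_of_mem (isOpen_Ioo.mem_nhds hx) e1)
    refine ⟨?_, fun x hx => (e2 x hx).deriv⟩
    rw [show (2 : WithTop ℕ∞) = 1 + 1 by norm_num, contDiffOn_succ_iff_deriv_of_isOpen isOpen_Ioo]
    refine ⟨fun x hx => (d1 x hx).differentiableAt.differentiableWithinAt, by simp, ?_⟩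
    rw [show (1 : WithTop ℕ∞) = 0 + 1 by norm_num, contDiffOn_succ_iff_deriv_of_isOpen isOpen_Ioo]
    refine ⟨fun x hx => (e2 x hx).differentiableAt.differentiableWithinAt, by simp, ?_⟩
    rw [contDiffOn_zero]
    exact c2.congr fun x hx => (e2 x hx).deriv
  · intro x hx t ht
    rw [(hCap x hx t ht).2]
    obtain ⟨s0, s1, s2, d1, d2, c2⟩ := cs_spatial hSL c hc
      (fun i => c i * ml α 1 (-lam i * t ^ α)) (hE t ht.1.le)
    have e1 : ∀ x ∈ Set.Ioo (0:ℝ) l, deriv (fun y => u y t) x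
        = ∑' i, c i * ml α 1 (-lam i * t ^ α) * deriv (X i) x := fun x hx => (d1 x hx).deriv
    have e2 : HasDerivAt (deriv (fun y => u y t))
        (∑' i, c i * ml α 1 (-lam i * t ^ α) * deriv (deriv (X i)) x) x :=
      (d2 x hx).congr_of_eventuallyEq
        (Filter.eventuallyEq_of_mem (isOpen_Ioo.mem_nhds hx) e1)
    have hp : HasDerivAt p (deriv p x) x :=
      (((hSL.hp.differentiableOn one_ne_zero).mono Ioo_subset_Icc_self).differentiableAt
        (isOpen_Ioo.mem_nhds hx)).hasDerivAt
    rw [(hp.fun_mul e2).deriv, e1 x hx]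
    simp only [u]
    rw [← tsum_mul_left, ← tsum_mul_left, ← tsum_mul_left,
      ← (s1 x hx |>.mul_left _).tsum_add (s2 x hx |>.mul_left _),
      ← ((s1 x hx |>.mul_left _).add (s2 x hx |>.mul_left _)).tsum_sub (s0 x hx |>.mul_left _),
      ← tsum_neg]
    congr 1
    ext i
    have h := hSL.heig i x hx
    rw [(hp.fun_mul ((cs_X_deriv hSL i).2.1 x hx)).deriv] at h
    linear_combination (c i * ml α 1 (-lam i * t ^ α)) * h
end

section
/- (Time regularity, Theorem 6) Let 0<α<1, T>0, and let the Sturm–Liouville eigendata (λ_i, X_i) on [0,l] satisfy the stated hypotheses. Let (c_i) be real numbers with ∑_{i=1}^∞ λ_i² c_i² < ∞, and define u(x,t) = ∑_{i=1}^∞ c_i E_α(−λ_i t^α) X_i(x). Then for each x ∈ [0,l] the function t ↦ u(x,t) is continuously differentiable on (0,T), and ∂u/∂t(x,t) = −∑_{i=1}^∞ c_i λ_i t^{α−1} E_{α,α}(−λ_i t^α) X_i(x), the series converging uniformly on [0,l]×[ε,T] for every 0<ε<T. -/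
open MeasureTheory Set Filter

open Topology

lemma tr_gamma_ratio {α x : ℝ} (hα : 0 < α) (hα1 : α < 1) (hx : 0 < x) :
    Real.Gamma x / Real.Gamma (x + α) ≤ (x + α) ^ (1 - α) / x := by
  have h1 := Real.Gamma_mul_add_mul_le_rpow_Gamma_mul_rpow_Gamma (s := x + α) (t := x + α + 1)
    (a := α) (b := 1 - α) (by positivity) (by positivity) hα (by linarith) (by ring)
  have hg : 0 < Real.Gamma (x + α) := Real.Gamma_pos_of_pos (by positivity)
  rw [show α * (x + α) + (1 - α) * (x + α + 1) = x + 1 by ring, Real.Gamma_add_one hx.ne',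
    Real.Gamma_add_one (by positivity : x + α ≠ 0), Real.mul_rpow (by positivity) hg.le,
    mul_left_comm, ← Real.rpow_add hg, show α + (1 - α) = 1 by ring, Real.rpow_one] at h1
  rw [div_le_div_iff₀ hg hx]
  linarith

lemma tr_ratio_tendsto {α : ℝ} (hα : 0 < α) (hα1 : α < 1) :
    Tendsto (fun x : ℝ => Real.Gamma x / Real.Gamma (x + α)) atTop (𝓝 0) := by
  have h2 : Tendsto (fun x : ℝ => (2:ℝ) ^ (1 - α) * x ^ (-α)) atTop (𝓝 0) := by
    simpa using (tendsto_rpow_neg_atTop hα).const_mul ((2:ℝ) ^ (1 - α))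
  refine squeeze_zero' ?_ ?_ h2
  · filter_upwards [eventually_gt_atTop 0] with x hx
    exact div_nonneg (Real.Gamma_pos_of_pos hx).le (Real.Gamma_pos_of_pos (by positivity)).le
  · filter_upwards [eventually_ge_atTop 1] with x hx
    have hx0 : 0 < x := by linarith
    refine (tr_gamma_ratio hα hα1 hx0).trans ?_
    rw [div_le_iff₀ hx0]
    calc (x + α) ^ (1 - α) ≤ (2 * x) ^ (1 - α) :=
          Real.rpow_le_rpow (by positivity) (by linarith) (by linarith)
      _ = 2 ^ (1 - α) * x ^ (1 - α) := Real.mul_rpow (by norm_num) hx0.le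
      _ = 2 ^ (1 - α) * x ^ (-α) * x := by
          rw [mul_assoc, ← Real.rpow_add_one hx0.ne']; ring_nf

lemma tr_summable {α β : ℝ} (hα : 0 < α) (hα1 : α < 1) (hβ : 0 < β) (R : ℝ) (hR : 0 < R) :
    Summable fun k : ℕ => R ^ k / Real.Gamma (α * k + β) := by
  have hg : ∀ k : ℕ, 0 < Real.Gamma (α * k + β) := fun k => Real.Gamma_pos_of_pos (by positivity)
  refine summable_of_ratio_test_tendsto_lt_one (l := 0) zero_lt_one
    (Eventually.of_forall fun k => (div_pos (pow_pos hR k) (hg k)).ne') ?_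
  have h1 : Tendsto (fun k : ℕ => α * (k:ℝ) + β) atTop atTop :=
    tendsto_atTop_add_const_right _ _ (tendsto_natCast_atTop_atTop.const_mul_atTop hα)
  have h2 := ((tr_ratio_tendsto hα hα1).comp h1).const_mul R
  rw [mul_zero] at h2
  refine h2.congr fun k => ?_
  have hk := hg k
  have hk1 := hg (k + 1)
  rw [Real.norm_of_nonneg (div_pos (pow_pos hR _) hk1).le,
    Real.norm_of_nonneg (div_pos (pow_pos hR _) hk).le]
  have e : α * ((k + 1 : ℕ) : ℝ) + β = α * k + β + α := by push_cast; ring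
  rw [e] at hk1 ⊢
  simp only [Function.comp]
  rw [pow_succ]
  field_simp

/-- entire coefficient sequences -/
def TrEnt (b : ℕ → ℝ) : Prop := ∀ R : ℝ, 0 < R → Summable fun k => |b k| * R ^ k

lemma TrEnt.deriv {b : ℕ → ℝ} (hb : TrEnt b) : TrEnt fun k => ((k:ℝ) + 1) * b (k + 1) := by
  intro R hR
  have h := (summable_nat_add_iff 1).2 (hb (2 * R) (by positivity))
  refine Summable.of_nonneg_of_le (fun k => by positivity) (fun k => ?_) (h.mul_right (1 / R))
  have h1 : ((k:ℝ) + 1) ≤ 2 ^ (k + 1) := by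
    exact_mod_cast (Nat.lt_two_pow_self (n := k + 1)).le
  rw [abs_mul, abs_of_nonneg (by positivity : (0:ℝ) ≤ (k:ℝ) + 1), mul_pow, pow_succ R k]
  calc ((k:ℝ) + 1) * |b (k + 1)| * R ^ k ≤ 2 ^ (k + 1) * |b (k + 1)| * R ^ k := by gcongr
    _ = _ := by field_simp

lemma TrEnt.summable {b : ℕ → ℝ} (hb : TrEnt b) (y : ℝ) : Summable fun k => b k * y ^ k := by
  refine Summable.of_norm_bounded (hb (|y| + 1) (by positivity)) fun k => ?_
  rw [norm_mul, norm_pow, Real.norm_eq_abs, Real.norm_eq_abs]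
  gcongr
  linarith

lemma TrEnt.hasDerivAt {b : ℕ → ℝ} (hb : TrEnt b) (y : ℝ) :
    HasDerivAt (fun y => ∑' k, b k * y ^ k) (∑' k : ℕ, ((k:ℝ) + 1) * b (k + 1) * y ^ k) y := by
  set R := |y| + 1 with hR
  have hu : Summable fun k : ℕ => |b k * k| * R ^ (k - 1) := by
    rw [← summable_nat_add_iff 1]
    refine (hb.deriv R (by positivity)).congr fun k => ?_
    simp [mul_comm]
  have := hasDerivAt_tsum_of_isPreconnected (𝕜 := ℝ) (t := Metric.ball (0:ℝ) R) (y := y) (y₀ := y)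
    (g := fun k y => b k * y ^ k) (g' := fun k y => b k * (k * y ^ (k - 1))) hu Metric.isOpen_ball
    (convex_ball _ _).isPreconnected
    (fun k z _ => (hasDerivAt_pow k z).const_mul (b k)) ?_ (by simp [hR]) (hb.summable y)
    (by simp [hR])
  · refine this.congr_deriv ?_
    have hs : Summable fun k : ℕ => b k * ((k:ℝ) * y ^ (k - 1)) := by
      rw [← summable_nat_add_iff 1]
      refine (hb.deriv.summable y).congr fun k => ?_
      simp; ring
    rw [hs.tsum_eq_zero_add]
    simp only [Nat.cast_zero, zero_mul, mul_zero, zero_add]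
    refine tsum_congr fun k => ?_
    simp; ring
  · intro k z hz
    simp only [Metric.mem_ball, dist_zero_right, Real.norm_eq_abs] at hz
    rw [← mul_assoc, norm_mul, norm_pow, Real.norm_eq_abs, Real.norm_eq_abs]
    gcongr

lemma tr_beta {u v : ℝ} (hu : 0 < u) (hv : 0 < v) :
    IntervalIntegrable (fun s : ℝ => s ^ (u - 1) * (1 - s) ^ (v - 1)) volume 0 1 ∧
    ∫ s in (0:ℝ)..1, s ^ (u - 1) * (1 - s) ^ (v - 1)
      = Real.Gamma u * Real.Gamma v / Real.Gamma (u + v) := by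
  have h1 := Complex.betaIntegral_convergent (u := (u:ℂ)) (v := (v:ℂ)) (by simpa) (by simpa)
  have h2 := ProbabilityTheory.beta_eq_betaIntegralReal u v hu hv
  have e : ∀ s ∈ Set.uIcc (0:ℝ) 1, ((s : ℂ) ^ ((u:ℂ) - 1) * (1 - (s : ℂ)) ^ ((v:ℂ) - 1))
      = ((s ^ (u - 1) * (1 - s) ^ (v - 1) : ℝ) : ℂ) := by
    intro s hs
    rw [Set.uIcc_of_le zero_le_one] at hs
    push_cast
    rw [Complex.ofReal_cpow hs.1, Complex.ofReal_cpow (by linarith [hs.2])]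
    push_cast
    rfl
  constructor
  · have h3 : IntervalIntegrable (fun s : ℝ => ((s ^ (u - 1) * (1 - s) ^ (v - 1) : ℝ) : ℂ))
        volume 0 1 := 
      h1.congr fun s hs => e s (Set.uIoc_subset_uIcc hs)
    rw [intervalIntegrable_iff] at h3 ⊢
    have h4 := h3.re
    simp only [RCLike.re_to_complex, Complex.ofReal_re] at h4
    exact h4
  · rw [ProbabilityTheory.beta] at h2
    rw [h2, Complex.betaIntegral, intervalIntegral.integral_congr e,
      intervalIntegral.integral_ofReal, Complex.ofReal_re]

/-- Maximum principle for the Caputo derivative, in power-series form. -/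
lemma tr_max {α y : ℝ} (hα : 0 < α) (hα1 : α < 1) {b : ℕ → ℝ} (hb : TrEnt b) (hy : 0 < y)
    (hmax : ∀ z ∈ Set.Icc (0:ℝ) y, (∑' k, b k * z ^ k) ≤ ∑' k, b k * y ^ k)
    (hS : Summable fun k : ℕ => |((k:ℝ) + 1) * b (k + 1)| * y ^ k *
      (Real.Gamma (α * k + α) / Real.Gamma (α * k + 1))) :
    0 ≤ ∑' k : ℕ, ((k:ℝ) + 1) * b (k + 1) * y ^ k *
      (Real.Gamma (α * k + α) / Real.Gamma (α * k + 1)) := by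
  set H : ℝ → ℝ := fun z => ∑' k, b k * z ^ k with hH
  set d : ℕ → ℝ := fun k => ((k:ℝ) + 1) * b (k + 1) with hd
  set H' : ℝ → ℝ := fun z => ∑' k, d k * z ^ k with hH'
  have hdE : TrEnt d := hb.deriv
  have hder : ∀ z, HasDerivAt H (H' z) z := fun z => hb.hasDerivAt z
  have hHc : Continuous H := continuous_iff_continuousAt.2 fun z => (hder z).continuousAt
  have hH'c : Continuous H' :=
    continuous_iff_continuousAt.2 fun z => (hdE.hasDerivAt z).continuousAt
  have hpc : Continuous fun s : ℝ => s ^ α := Real.continuous_rpow_const hα.le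
  have h1α : 0 < 1 - α := by linarith
  set φ : ℝ → ℝ := fun s => (y * α * H' (y * s ^ α)) * (s ^ (α - 1) * (1 - s) ^ ((1 - α) - 1))
    with hφ
  have hφi : IntervalIntegrable φ volume 0 1 := by
    refine (tr_beta hα h1α).1.continuousOn_mul ?_
    exact (continuous_const.mul (hH'c.comp (continuous_const.mul hpc))).continuousOn
  -- termwise integration
  set F : ℕ → ℝ → ℝ := fun k s =>
    (d k * y ^ k * (y * α)) * (s ^ (α * k + α - 1) * (1 - s) ^ ((1 - α) - 1)) with hF
  have hka : ∀ k : ℕ, 0 < α * k + α := fun k => by positivity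
  have hFi : ∀ k, Integrable (F k) (volume.restrict (Ioc 0 1)) := by
    intro k
    have := ((tr_beta (hka k) h1α).1.const_mul (d k * y ^ k * (y * α)))
    rw [intervalIntegrable_iff_integrableOn_Ioc_of_le zero_le_one] at this
    exact this
  have hBk : ∀ k : ℕ, ∫ s in Ioc (0:ℝ) 1, s ^ (α * k + α - 1) * (1 - s) ^ ((1 - α) - 1)
      = Real.Gamma (α * k + α) * Real.Gamma (1 - α) / Real.Gamma (α * k + 1) := by
    intro k
    rw [← intervalIntegral.integral_of_le zero_le_one, (tr_beta (hka k) h1α).2]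
    congr 2; ring
  have hFint : ∀ k, ∫ s in Ioc (0:ℝ) 1, F k s = d k * y ^ k *
      (Real.Gamma (α * k + α) / Real.Gamma (α * k + 1)) * (y * α * Real.Gamma (1 - α)) := by
    intro k
    rw [hF]
    simp only
    rw [integral_const_mul, hBk]
    ring
  have hFnorm : ∀ k, ∫ s in Ioc (0:ℝ) 1, ‖F k s‖ = |d k| * y ^ k *
      (Real.Gamma (α * k + α) / Real.Gamma (α * k + 1)) * (y * α * Real.Gamma (1 - α)) := by
    intro k
    have : ∫ s in Ioc (0:ℝ) 1, ‖F k s‖ = ∫ s in Ioc (0:ℝ) 1,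
        (|d k| * y ^ k * (y * α)) * (s ^ (α * k + α - 1) * (1 - s) ^ ((1 - α) - 1)) := by
      refine setIntegral_congr_fun measurableSet_Ioc fun s hs => ?_
      have h1 : 0 ≤ s ^ (α * k + α - 1) := Real.rpow_nonneg hs.1.le _
      have h2 : 0 ≤ (1 - s) ^ ((1 - α) - 1) := Real.rpow_nonneg (by linarith [hs.2]) _
      simp only [hF, Real.norm_eq_abs, abs_mul, abs_of_nonneg h1, abs_of_nonneg h2,
        abs_of_pos hy, abs_of_pos hα, abs_pow]
    rw [this, integral_const_mul, hBk]
    ring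
  have hsum := hasSum_integral_of_summable_integral_norm hFi
    ((hS.mul_right (y * α * Real.Gamma (1 - α))).congr fun k => (hFnorm k).symm)
  have hφF : ∫ s in (0:ℝ)..1, φ s = (∑' k : ℕ, d k * y ^ k *
      (Real.Gamma (α * k + α) / Real.Gamma (α * k + 1))) * (y * α * Real.Gamma (1 - α)) := by
    rw [intervalIntegral.integral_of_le zero_le_one, ← tsum_mul_right]
    rw [← tsum_congr hFint, hsum.tsum_eq]
    refine setIntegral_congr_fun measurableSet_Ioc fun s hs => ?_
    simp only [hφ, hF, hH']
    rw [← tsum_mul_left, ← tsum_mul_right]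
    refine tsum_congr fun k => ?_
    rw [mul_pow, ← Real.rpow_natCast (s ^ α) k, ← Real.rpow_mul hs.1.le,
      show α * k + α - 1 = α * k + (α - 1) by ring, Real.rpow_add hs.1]
    ring
  have hΓ : 0 < y * α * Real.Gamma (1 - α) :=
    mul_pos (mul_pos hy hα) (Real.Gamma_pos_of_pos h1α)
  suffices h : 0 ≤ ∫ s in (0:ℝ)..1, φ s by
    rw [hφF] at h
    exact nonneg_of_mul_nonneg_left h hΓ
  -- the comparison
  set f : ℝ → ℝ := fun s => H (y * s ^ α) with hf
  have hfc : Continuous f := hHc.comp (continuous_const.mul hpc)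
  have hfder : ∀ s : ℝ, 0 < s → HasDerivAt f (H' (y * s ^ α) * (y * (α * s ^ (α - 1)))) s := by
    intro s hs
    exact (hder (y * s ^ α)).comp s ((Real.hasDerivAt_rpow_const (Or.inl hs.ne')).const_mul y)
  have hf1 : f 1 = H y := by simp [hf]
  have hle : ∀ s ∈ Icc (0:ℝ) 1, f s ≤ f 1 := by
    intro s hs
    rw [hf1]
    refine hmax _ ⟨mul_nonneg hy.le (Real.rpow_nonneg hs.1 _), ?_⟩
    exact mul_le_of_le_one_right hy.le (Real.rpow_le_one hs.1 hs.2 hα.le)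
  set G : ℝ → ℝ := fun s => (1 - s) ^ (-α) * (f s - f 1) with hG
  have hcmp : ∀ r ∈ Ioo (0:ℝ) 1, G r ≤ ∫ s in (0:ℝ)..r, φ s := by
    intro r hr
    have h0 : G 0 ≤ 0 := by
      simp only [hG, sub_zero, Real.one_rpow, one_mul]
      linarith [hle 0 (by simp)]
    have := intervalIntegral.sub_le_integral_of_hasDeriv_right_of_le (g := G) (φ := φ)
      (g' := fun s => (-1 * (-α) * (1 - s) ^ (-α - 1)) * (f s - f 1) +
        (1 - s) ^ (-α) * (H' (y * s ^ α) * (y * (α * s ^ (α - 1))))) hr.1.le ?_ ?_ ?_ ?_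
    · linarith
    · refine ContinuousOn.mul ?_ (hfc.sub continuous_const).continuousOn
      refine ContinuousOn.rpow_const (by fun_prop) fun s hs => Or.inl ?_
      have := hs.2; have := hr.2
      exact ne_of_gt (by linarith)
    · intro s hs
      have hs1 : 0 < 1 - s := by linarith [hs.2, hr.2]
      have ha : HasDerivAt (fun s : ℝ => 1 - s) (-1) s := by
        simpa using (hasDerivAt_id s).const_sub 1
      exact ((ha.rpow_const (p := -α) (Or.inl hs1.ne')).mul
        ((hfder s hs.1).sub_const (f 1))).hasDerivWithinAt
    · rw [integrableOn_Icc_iff_integrableOn_Ioc]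
      rw [intervalIntegrable_iff_integrableOn_Ioc_of_le zero_le_one] at hφi
      exact hφi.mono_set (Ioc_subset_Ioc_right hr.2.le)
    · intro s hs
      have hs1 : 0 < 1 - s := by linarith [hs.2, hr.2]
      have h1 : 0 ≤ (1 - s) ^ (-α - 1) := Real.rpow_nonneg hs1.le _
      have h2 : f s - f 1 ≤ 0 := by linarith [hle s ⟨hs.1.le, by linarith⟩]
      have h3 : (-1 * (-α) * (1 - s) ^ (-α - 1)) * (f s - f 1) ≤ 0 :=
        mul_nonpos_of_nonneg_of_nonpos (by nlinarith [mul_nonneg hα.le h1]) h2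
      have h4 : φ s = (1 - s) ^ (-α) * (H' (y * s ^ α) * (y * (α * s ^ (α - 1)))) := by
        simp only [hφ]
        rw [show (1 - α) - 1 = -α by ring]
        ring
      rw [h4]
      linarith
  have hlim1 : Tendsto (fun r => ∫ s in (0:ℝ)..r, φ s) (𝓝[<] 1) (𝓝 (∫ s in (0:ℝ)..1, φ s)) := by
    have := intervalIntegral.continuousOn_primitive_interval' hφi (a := 0) (by simp)
    rw [Set.uIcc_of_le zero_le_one] at this
    have h1 := this 1 (by simp)
    refine h1.mono_left ?_
    rw [← nhdsWithin_Ioo_eq_nhdsLT (zero_lt_one (α := ℝ))]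
    exact nhdsWithin_mono _ Ioo_subset_Icc_self
  have hlim2 : Tendsto G (𝓝[<] 1) (𝓝 0) := by
    have h1 := (hasDerivAt_iff_tendsto_slope.1 (hfder 1 one_pos)).mono_left
      (nhdsWithin_mono (1:ℝ) (fun s (hs : s < 1) => ne_of_lt hs))
    have h2 : Tendsto (fun s : ℝ => -(1 - s) ^ (1 - α)) (𝓝[<] 1) (𝓝 0) := by
      have : Continuous fun s : ℝ => -(1 - s) ^ (1 - α) :=
        ((Real.continuous_rpow_const h1α.le).comp (continuous_const.sub continuous_id)).neg
      have h3 := this.tendsto 1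
      rw [sub_self, Real.zero_rpow h1α.ne', neg_zero] at h3
      exact h3.mono_left nhdsWithin_le_nhds
    have h3 := h2.mul h1
    rw [zero_mul] at h3
    refine h3.congr' ?_
    filter_upwards [self_mem_nhdsWithin] with s (hs : s < 1)
    have hs1 : 0 < 1 - s := by linarith
    simp only [hG, slope_def_field]
    rw [show 1 - α = -α + 1 by ring, Real.rpow_add_one hs1.ne']
    have : s - 1 ≠ 0 := by linarith
    field_simp
    ring
  refine le_of_tendsto_of_tendsto hlim2 hlim1 ?_
  filter_upwards [Ioo_mem_nhdsLT (zero_lt_one (α := ℝ))] with r hr using hcmp r hr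

lemma tr_min {α y : ℝ} (hα : 0 < α) (hα1 : α < 1) {b : ℕ → ℝ} (hb : TrEnt b) (hy : 0 < y)
    (hmin : ∀ z ∈ Set.Icc (0:ℝ) y, (∑' k, b k * y ^ k) ≤ ∑' k, b k * z ^ k)
    (hS : Summable fun k : ℕ => |((k:ℝ) + 1) * b (k + 1)| * y ^ k *
      (Real.Gamma (α * k + α) / Real.Gamma (α * k + 1))) :
    ∑' k : ℕ, ((k:ℝ) + 1) * b (k + 1) * y ^ k *
      (Real.Gamma (α * k + α) / Real.Gamma (α * k + 1)) ≤ 0 := by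
  have := tr_max hα hα1 (b := fun k => - b k) (fun R hR => by simpa using hb R hR) hy
    (fun z hz => by
      simp only [neg_mul, tsum_neg]
      linarith [hmin z hz]) (by simpa using hS)
  simp only [neg_mul, mul_neg, tsum_neg] at this
  linarith

/-- the coefficients of `E_α(-y)` -/
noncomputable def trb (α : ℝ) (k : ℕ) : ℝ := (-1) ^ k / Real.Gamma (α * k + 1)

lemma trGpos {α : ℝ} (hα : 0 < α) (k : ℕ) : 0 < Real.Gamma (α * k + 1) :=
  Real.Gamma_pos_of_pos (by positivity)

lemma trGpos' {α : ℝ} (hα : 0 < α) (k : ℕ) : 0 < Real.Gamma (α * k + α) :=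
  Real.Gamma_pos_of_pos (by positivity)

lemma trG_succ {α : ℝ} (hα : 0 < α) (k : ℕ) :
    Real.Gamma (α * ((k + 1 : ℕ) : ℝ) + 1) = α * (k + 1) * Real.Gamma (α * k + α) := by
  have h : α * ((k + 1 : ℕ) : ℝ) = α * k + α := by push_cast; ring
  rw [Real.Gamma_add_one (by positivity), h]
  ring

lemma trb_rec {α : ℝ} (hα : 0 < α) (k : ℕ) :
    ((k:ℝ) + 1) * trb α (k + 1) * (Real.Gamma (α * k + α) / Real.Gamma (α * k + 1))
      = -(1 / α) * trb α k := by
  have h1 := trGpos hα k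
  have h2 := trGpos' hα k
  rw [trb, trb, trG_succ hα, pow_succ]
  field_simp

lemma tr_ent {α β : ℝ} (hα : 0 < α) (hα1 : α < 1) (hβ : 0 < β) :
    TrEnt fun k : ℕ => 1 / Real.Gamma (α * k + β) := by
  intro R hR
  refine (tr_summable hα hα1 hβ R hR).congr fun k => ?_
  have : 0 < Real.Gamma (α * k + β) := Real.Gamma_pos_of_pos (by positivity)
  rw [abs_of_pos (by positivity)]
  ring

lemma trb_ent {α : ℝ} (hα : 0 < α) (hα1 : α < 1) : TrEnt (trb α) := by
  intro R hR
  refine (tr_ent hα hα1 one_pos R hR).congr fun k => ?_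
  simp [trb, abs_div]

lemma trb_ent' {α : ℝ} (hα : 0 < α) (hα1 : α < 1) : TrEnt fun k => (k:ℝ) * trb α k := by
  intro R hR
  refine Summable.of_nonneg_of_le (fun k => by positivity) (fun k => ?_)
    (trb_ent hα hα1 (2 * R) (by positivity))
  have h1 : (k:ℝ) ≤ 2 ^ k := by exact_mod_cast (Nat.lt_two_pow_self (n := k)).le
  rw [abs_mul, Nat.abs_cast, mul_pow]
  calc (k:ℝ) * |trb α k| * R ^ k ≤ 2 ^ k * |trb α k| * R ^ k := by gcongr
    _ = _ := by ring

lemma tr_E_eq (α y : ℝ) : ∑' k, trb α k * y ^ k = ml α 1 (-y) := by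
  rw [ml]
  refine tsum_congr fun k => ?_
  rw [trb, neg_pow y]; ring

lemma tr_W_eq {α : ℝ} (hα : 0 < α) (hα1 : α < 1) (y : ℝ) :
    ∑' k : ℕ, (k:ℝ) * trb α k * y ^ k = -(y / α) * ml α α (-y) := by
  rw [((trb_ent' hα hα1).summable y).tsum_eq_zero_add, ml, ← tsum_mul_left]
  simp only [Nat.cast_zero, zero_mul, zero_add]
  refine tsum_congr fun k => ?_
  have h2 := trGpos' hα k
  rw [trb, trG_succ hα, pow_succ, neg_pow y]
  push_cast
  field_simp
  ring

lemma trE_cond {α : ℝ} (hα : 0 < α) (hα1 : α < 1) {y : ℝ} (hy : 0 < y) :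
    Summable fun k : ℕ => |((k:ℝ) + 1) * trb α (k + 1)| * y ^ k *
      (Real.Gamma (α * k + α) / Real.Gamma (α * k + 1)) := by
  refine ((trb_ent hα hα1 y hy).mul_left (1 / α)).congr fun k => ?_
  have h3 : 0 < Real.Gamma (α * k + α) / Real.Gamma (α * k + 1) :=
    div_pos (trGpos' hα k) (trGpos hα k)
  have := congrArg abs (trb_rec hα k)
  rw [abs_mul _ (Real.Gamma (α * k + α) / Real.Gamma (α * k + 1)), abs_of_pos h3,
    abs_mul (-(1 / α)), abs_neg,
    abs_of_pos (by positivity : 0 < 1 / α)] at this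
  rw [mul_right_comm, this]
  ring

lemma trW_cond {α : ℝ} (hα : 0 < α) (hα1 : α < 1) {y : ℝ} (hy : 0 < y) :
    Summable fun k : ℕ => |((k:ℝ) + 1) * (((k + 1 : ℕ) : ℝ) * trb α (k + 1))| * y ^ k *
      (Real.Gamma (α * k + α) / Real.Gamma (α * k + 1)) := by
  refine (((trb_ent' hα hα1 y hy).add (trb_ent hα hα1 y hy)).mul_left (1 / α)).congr fun k => ?_
  have h3 : 0 < Real.Gamma (α * k + α) / Real.Gamma (α * k + 1) :=
    div_pos (trGpos' hα k) (trGpos hα k)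
  have := congrArg abs (trb_rec hα k)
  rw [abs_mul _ (Real.Gamma (α * k + α) / Real.Gamma (α * k + 1)), abs_of_pos h3, abs_mul (-(1 / α)),
    abs_neg, abs_of_pos (by positivity : 0 < 1 / α), abs_mul] at this
  have h4 : |(k:ℝ) + 1| = k + 1 := abs_of_pos (by positivity)
  have e : |((k:ℝ) + 1) * (((k + 1 : ℕ) : ℝ) * trb α (k + 1))| * y ^ k *
      (Real.Gamma (α * k + α) / Real.Gamma (α * k + 1)) = (k + 1) * y ^ k *
      (|(k:ℝ) + 1| * |trb α (k + 1)| * (Real.Gamma (α * k + α) / Real.Gamma (α * k + 1))) := by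
    push_cast
    rw [abs_mul, abs_mul, h4]; ring
  rw [e, this, abs_mul, Nat.abs_cast]
  ring

lemma trE_val {α : ℝ} (hα : 0 < α) {y : ℝ} :
    ∑' k : ℕ, ((k:ℝ) + 1) * trb α (k + 1) * y ^ k *
      (Real.Gamma (α * k + α) / Real.Gamma (α * k + 1)) = -(1 / α) * ml α 1 (-y) := by
  rw [← tr_E_eq, ← tsum_mul_left]
  refine tsum_congr fun k => ?_
  rw [mul_right_comm, trb_rec hα]; ring

lemma trW_val {α : ℝ} (hα : 0 < α) (hα1 : α < 1) {y : ℝ} :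
    ∑' k : ℕ, ((k:ℝ) + 1) * (((k + 1 : ℕ) : ℝ) * trb α (k + 1)) * y ^ k *
      (Real.Gamma (α * k + α) / Real.Gamma (α * k + 1))
      = -(1 / α) * ((∑' k : ℕ, (k:ℝ) * trb α k * y ^ k) + ml α 1 (-y)) := by
  rw [← tr_E_eq, ← Summable.tsum_add ((trb_ent' hα hα1).summable y) ((trb_ent hα hα1).summable y),
    ← tsum_mul_left]
  refine tsum_congr fun k => ?_
  have := trb_rec hα k
  calc _ = (k + 1) * y ^ k * (((k:ℝ) + 1) * trb α (k + 1) *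
        (Real.Gamma (α * k + α) / Real.Gamma (α * k + 1))) := by push_cast; ring
    _ = _ := by rw [this]; ring

lemma tr_cont {b : ℕ → ℝ} (hb : TrEnt b) : Continuous fun y => ∑' k, b k * y ^ k :=
  continuous_iff_continuousAt.2 fun z => (hb.hasDerivAt z).continuousAt

lemma tr_ml_zero (α : ℝ) : ml α 1 0 = 1 := by
  rw [ml, tsum_eq_single 0]
  · simp
  · intro k hk; simp [hk]

lemma tr_ml_one_bounds {α : ℝ} (hα : 0 < α) (hα1 : α < 1) {x : ℝ} (hx : 0 ≤ x) :
    0 ≤ ml α 1 (-x) ∧ ml α 1 (-x) ≤ 1 := by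
  have hc := tr_cont (trb_ent hα hα1)
  have hxm : x ∈ Icc 0 x := ⟨hx, le_rfl⟩
  have hαi : 0 < 1 / α := by positivity
  constructor
  · obtain ⟨y, hy, hmin⟩ := isCompact_Icc.exists_isMinOn ⟨x, hxm⟩ hc.continuousOn
    have h1 := hmin hxm
    simp only [Set.mem_ofPred_eq, tr_E_eq] at h1
    refine le_trans ?_ h1
    rcases hy.1.eq_or_lt with h0 | h0
    · rw [← h0, neg_zero, tr_ml_zero]; norm_num
    · have := tr_min hα hα1 (trb_ent hα hα1) h0 (fun z hz => hmin ⟨hz.1, hz.2.trans hy.2⟩)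
        (trE_cond hα hα1 h0)
      rw [trE_val hα] at this
      by_contra hneg
      push Not at hneg
      nlinarith
  · obtain ⟨y, hy, hmax⟩ := isCompact_Icc.exists_isMaxOn ⟨x, hxm⟩ hc.continuousOn
    have h1 := hmax hxm
    simp only [Set.mem_ofPred_eq, tr_E_eq] at h1
    refine le_trans h1 ?_
    rcases hy.1.eq_or_lt with h0 | h0
    · rw [← h0, neg_zero, tr_ml_zero]
    · have := tr_max hα hα1 (trb_ent hα hα1) h0 (fun z hz => hmax ⟨hz.1, hz.2.trans hy.2⟩)
        (trE_cond hα hα1 h0)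
      rw [trE_val hα] at this
      by_contra hneg
      push Not at hneg
      nlinarith

lemma tr_ml_alpha_bounds {α : ℝ} (hα : 0 < α) (hα1 : α < 1) {x : ℝ} (hx : 0 ≤ x) :
    |x * ml α α (-x)| ≤ α := by
  have hc := tr_cont (trb_ent' hα hα1)
  have hxm : x ∈ Icc 0 x := ⟨hx, le_rfl⟩
  have hαi : 0 < 1 / α := by positivity
  have hW0 : ∑' k : ℕ, (k:ℝ) * trb α k * (0:ℝ) ^ k = 0 := by rw [tr_W_eq hα hα1]; simp
  have e : ∑' k : ℕ, (k:ℝ) * trb α k * x ^ k = -(1 / α) * (x * ml α α (-x)) := by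
    rw [tr_W_eq hα hα1]; ring
  have hlow : -1 ≤ ∑' k : ℕ, (k:ℝ) * trb α k * x ^ k := by
    obtain ⟨y, hy, hmin⟩ := isCompact_Icc.exists_isMinOn ⟨x, hxm⟩ hc.continuousOn
    have h1 := hmin hxm
    simp only [Set.mem_ofPred_eq] at h1
    refine le_trans ?_ h1
    rcases hy.1.eq_or_lt with h0 | h0
    · rw [← h0, hW0]; norm_num
    · have := tr_min hα hα1 (trb_ent' hα hα1) h0 (fun z hz => hmin ⟨hz.1, hz.2.trans hy.2⟩)
        (trW_cond hα hα1 h0)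
      rw [trW_val hα hα1] at this
      have := (tr_ml_one_bounds hα hα1 h0.le).2
      by_contra hneg
      push Not at hneg
      nlinarith
  have hup : ∑' k : ℕ, (k:ℝ) * trb α k * x ^ k ≤ 0 := by
    obtain ⟨y, hy, hmax⟩ := isCompact_Icc.exists_isMaxOn ⟨x, hxm⟩ hc.continuousOn
    have h1 := hmax hxm
    simp only [Set.mem_ofPred_eq] at h1
    refine le_trans h1 ?_
    rcases hy.1.eq_or_lt with h0 | h0
    · rw [← h0, hW0]
    · have := tr_max hα hα1 (trb_ent' hα hα1) h0 (fun z hz => hmax ⟨hz.1, hz.2.trans hy.2⟩)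
        (trW_cond hα hα1 h0)
      rw [trW_val hα hα1] at this
      have := (tr_ml_one_bounds hα hα1 h0.le).1
      by_contra hneg
      push Not at hneg
      nlinarith
  rw [e] at hlow hup
  have e2 : x * ml α α (-x) = α * (1 / α * (x * ml α α (-x))) := by field_simp
  rw [abs_le]
  constructor <;> nlinarith

lemma tr_ml_hasDerivAt {α : ℝ} (hα : 0 < α) (hα1 : α < 1) (z : ℝ) :
    HasDerivAt (ml α 1) (ml α α z / α) z := by
  have h := (tr_ent hα hα1 one_pos).hasDerivAt z
  have e : (fun y => ∑' k : ℕ, 1 / Real.Gamma (α * k + 1) * y ^ k) = ml α 1 := by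
    funext y; rw [ml]; refine tsum_congr fun k => ?_; ring
  rw [e] at h
  refine h.congr_deriv ?_
  rw [ml, ← tsum_div_const]
  refine tsum_congr fun k => ?_
  have h2 := trGpos' hα k
  rw [trG_succ hα]
  field_simp

lemma tr_ml_cont {α : ℝ} (hα : 0 < α) (hα1 : α < 1) : Continuous (ml α α) := by
  have h := tr_cont (tr_ent hα hα1 hα)
  have e : (fun y => ∑' k : ℕ, 1 / Real.Gamma (α * k + α) * y ^ k) = ml α α := by
    funext y; rw [ml]; refine tsum_congr fun k => ?_; ring
  rwa [e] at h

lemma tr_unif {ι : Type*} {s : Set ι} {v F : ℕ → ι → ℝ} {V : ι → ℝ}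
    (hv : TendstoUniformlyOn (fun N z => ∑ i ∈ Finset.range N, v i z) V atTop s)
    (hF : ∀ i, ∀ z ∈ s, |F i z| ≤ v i z) :
    (∀ z ∈ s, Summable fun i => v i z) ∧ TendstoUniformlyOn
      (fun N z => ∑ i ∈ Finset.range N, F i z) (fun z => ∑' i, F i z) atTop s := by
  have hnn : ∀ z ∈ s, ∀ i, 0 ≤ v i z := fun z hz i => (abs_nonneg _).trans (hF i z hz)
  have hsum : ∀ z ∈ s, HasSum (fun i => v i z) (V z) := fun z hz =>
    (hasSum_iff_tendsto_nat_of_nonneg (hnn z hz) _).2 (hv.tendsto_at hz)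
  refine ⟨fun z hz => (hsum z hz).summable, ?_⟩
  rw [Metric.tendstoUniformlyOn_iff] at hv ⊢
  intro ε hε
  filter_upwards [hv ε hε] with N hN z hz
  refine lt_of_le_of_lt ?_ (hN z hz)
  have hFs : Summable fun i => F i z :=
    Summable.of_norm_bounded (hsum z hz).summable fun i => hF i z hz
  have h1 := hFs.sum_add_tsum_nat_add N
  have h2 := (hsum z hz).summable.sum_add_tsum_nat_add N
  rw [(hsum z hz).tsum_eq] at h2
  have h3 : ‖∑' i, F (i + N) z‖ ≤ ∑' i, v (i + N) z :=
    tsum_of_norm_bounded ((summable_nat_add_iff N).2 (hsum z hz).summable).hasSum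
      fun i => hF _ z hz
  rw [Real.dist_eq, Real.dist_eq]
  calc |∑' i, F i z - ∑ i ∈ Finset.range N, F i z| = |∑' i, F (i + N) z| := by
        congr 1; linarith
    _ ≤ ∑' i, v (i + N) z := h3
    _ = V z - ∑ i ∈ Finset.range N, v i z := by linarith
    _ ≤ _ := le_abs_self _

lemma tr_term_hasDerivAt {α : ℝ} (hα : 0 < α) (hα1 : α < 1) (a b lam t : ℝ) (ht : 0 < t) :
    HasDerivAt (fun t : ℝ => a * ml α 1 (-lam * t ^ α) * b)
      (-(a * lam * t ^ (α - 1) * ml α α (-lam * t ^ α) * b)) t := by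
  have h1 := (tr_ml_hasDerivAt hα hα1 (-lam * t ^ α)).comp t
    ((Real.hasDerivAt_rpow_const (p := α) (Or.inl ht.ne')).const_mul (-lam))
  refine ((h1.const_mul a).mul_const b).congr_deriv ?_
  field_simp

lemma tr_term_bound {α : ℝ} (hα : 0 < α) (hα1 : α < 1) {lam ε t : ℝ} (c X : ℝ) (hlam : 0 < lam)
    (hε : 0 < ε) (ht : ε ≤ t) :
    |-(c * lam * t ^ (α - 1) * ml α α (-lam * t ^ α) * X)| ≤ ε⁻¹ * |c * X| := by
  have ht0 : 0 < t := hε.trans_le ht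
  have h1 := tr_ml_alpha_bounds hα hα1 (x := lam * t ^ α) (by positivity)
  rw [← neg_mul] at h1
  have e : -(c * lam * t ^ (α - 1) * ml α α (-lam * t ^ α) * X)
      = -(c * X * (lam * t ^ α * ml α α (-lam * t ^ α)) * t⁻¹) := by
    rw [Real.rpow_sub_one ht0.ne']; field_simp
  rw [e, abs_neg, abs_mul, abs_mul (c * X), abs_of_pos (inv_pos.2 ht0)]
  have h2 : t⁻¹ ≤ ε⁻¹ := inv_anti₀ hε ht
  calc |c * X| * |lam * t ^ α * ml α α (-lam * t ^ α)| * t⁻¹ ≤ |c * X| * 1 * ε⁻¹ := by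
        gcongr; linarith
    _ = _ := by ring

/-- time regularity, Theorem 6: with Sturm–Liouville eigendata
`(λ_i, X_i)` on `[0,l]` and coefficients with `∑ λ_i² c_i² < ∞`, the function
`u(x,t) = ∑ c_i E_α(−λ_i t^α) X_i(x)` is, for each `x ∈ [0,l]`, continuously
differentiable in `t` on `(0,T)` with
`∂u/∂t(x,t) = −∑ c_i λ_i t^{α−1} E_{α,α}(−λ_i t^α) X_i(x)`, the series converging
uniformly on `[0,l]×[ε,T]` for every `0<ε<T`. -/
theorem time_regularity_1d (α T l : ℝ) (hα : 0 < α) (hα1 : α < 1) (hT : 0 < T)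
    (p q : ℝ → ℝ) (lam : ℕ → ℝ) (X : ℕ → ℝ → ℝ)
    (hSL : SturmLiouvilleData l p q lam X)
    (c : ℕ → ℝ) (hc : Summable fun i => lam i ^ 2 * c i ^ 2) :
    let u : ℝ → ℝ → ℝ := fun x t => ∑' i, c i * ml α 1 (-lam i * t ^ α) * X i x
    (∀ x ∈ Set.Icc (0:ℝ) l,
      ContDiffOn ℝ 1 (fun t => u x t) (Set.Ioo 0 T) ∧
      ∀ t ∈ Set.Ioo (0:ℝ) T,
        deriv (fun s => u x s) t
          = -∑' i, c i * lam i * t ^ (α - 1) * ml α α (-lam i * t ^ α) * X i x) ∧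
    (∀ ε : ℝ, 0 < ε → ε < T →
      TendstoUniformlyOn
        (fun N (z : ℝ × ℝ) => ∑ i ∈ Finset.range N,
          -(c i * lam i * z.2 ^ (α - 1) * ml α α (-lam i * z.2 ^ α) * X i z.1))
        (fun z : ℝ × ℝ =>
          -∑' i, c i * lam i * z.2 ^ (α - 1) * ml α α (-lam i * z.2 ^ α) * X i z.1)
        Filter.atTop (Set.Icc 0 l ×ˢ Set.Icc ε T)) := by
  intro u
  have hlam := hSL.hlam
  obtain ⟨M, hM⟩ := (tendsto_inv_atTop_zero.comp hSL.hlamtop).bddAbove_range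
  have hM' : ∀ i, (lam i)⁻¹ ≤ M := fun i => hM ⟨i, rfl⟩
  obtain ⟨g, hg⟩ := hSL.hser1
  set v : ℕ → ℝ → ℝ := fun i x => M * (lam i ^ 2 * c i ^ 2) + X i x ^ 2 / lam i with hv
  have hvu : TendstoUniformlyOn (fun N x => ∑ i ∈ Finset.range N, v i x)
      (fun x => (∑' i, M * (lam i ^ 2 * c i ^ 2)) + g x) atTop (Icc 0 l) := by
    have h1 := (hc.mul_left M).hasSum.tendsto_sum_nat.tendstoUniformlyOn_const (Icc (0:ℝ) l)
    refine (h1.add hg).congr (Eventually.of_forall fun N x _ => ?_)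
    simp [hv, Finset.sum_add_distrib]
  have hcX : ∀ i x, |c i * X i x| ≤ v i x := by
    intro i x
    have hl := hlam i
    have h1 : lam i * c i ^ 2 ≤ M * (lam i ^ 2 * c i ^ 2) := by
      calc lam i * c i ^ 2 = (lam i)⁻¹ * (lam i ^ 2 * c i ^ 2) := by field_simp
        _ ≤ _ := by gcongr; exact hM' i
    have h2 : 2 * |c i * X i x| ≤ lam i * c i ^ 2 + X i x ^ 2 / lam i := by
      have h3 : lam i * c i ^ 2 + X i x ^ 2 / lam i - 2 * |c i * X i x|
          = (lam i * |c i| - |X i x|) ^ 2 / lam i := by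
        rw [abs_mul, sub_sq, mul_pow, sq_abs, sq_abs]
        field_simp
        ring
      have h4 : 0 ≤ (lam i * |c i| - |X i x|) ^ 2 / lam i := by positivity
      linarith
    have := abs_nonneg (c i * X i x)
    simp only [hv]
    linarith
  have hcXs : ∀ x ∈ Icc (0:ℝ) l, Summable fun i => |c i * X i x| := fun x hx =>
    Summable.of_nonneg_of_le (fun i => abs_nonneg _) (fun i => hcX i x)
      ((tr_unif (F := fun i x => c i * X i x) hvu fun i x _ => hcX i x).1 x hx)
  have hder : ∀ x ∈ Icc (0:ℝ) l, ∀ t : ℝ, 0 < t → HasDerivAt (fun s => u x s)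
      (∑' i, -(c i * lam i * t ^ (α - 1) * ml α α (-lam i * t ^ α) * X i x)) t := by
    intro x hx t ht
    refine hasDerivAt_tsum_of_isPreconnected (t := Ioi (t / 2)) (y₀ := t)
      (g' := fun i t => -(c i * lam i * t ^ (α - 1) * ml α α (-lam i * t ^ α) * X i x))
      ((hcXs x hx).mul_left (t / 2)⁻¹) isOpen_Ioi isPreconnected_Ioi ?_ ?_ ?_ ?_ ?_
    · intro i s hs
      exact tr_term_hasDerivAt hα hα1 _ _ _ _ (lt_trans (by positivity) hs)
    · intro i s hs
      exact tr_term_bound hα hα1 _ _ (hlam i) (by positivity) (le_of_lt hs)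
    · simp; linarith
    · refine Summable.of_norm_bounded (hcXs x hx) fun i => ?_
      have h1 := tr_ml_one_bounds hα hα1 (x := lam i * t ^ α) (by have := hlam i; positivity)
      rw [← neg_mul] at h1
      rw [mul_right_comm, norm_mul, Real.norm_eq_abs, Real.norm_eq_abs, abs_of_nonneg h1.1]
      exact mul_le_of_le_one_right (abs_nonneg _) h1.2
    · simp; linarith
  refine ⟨fun x hx => ⟨?_, fun t ht => ?_⟩, ?_⟩
  · rw [contDiffOn_one_iff_derivWithin (isOpen_Ioo.uniqueDiffOn)]
    refine ⟨fun t ht => (hder x hx t ht.1).differentiableAt.differentiableWithinAt, ?_⟩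
    have e : EqOn (derivWithin (fun t => u x t) (Ioo 0 T))
        (fun t => ∑' i, -(c i * lam i * t ^ (α - 1) * ml α α (-lam i * t ^ α) * X i x))
        (Ioo 0 T) := fun t ht => by
      rw [derivWithin_of_isOpen isOpen_Ioo ht, (hder x hx t ht.1).deriv]
    refine ContinuousOn.congr ?_ e
    intro t ht
    have ht0 := ht.1
    have h1 : ContinuousOn
        (fun t => ∑' i, -(c i * lam i * t ^ (α - 1) * ml α α (-lam i * t ^ α) * X i x))
        (Ioi (t / 2)) := by
      refine continuousOn_tsum ?_ ((hcXs x hx).mul_left (t / 2)⁻¹) ?_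
      · intro i s hs
        have hs0 : s ≠ 0 := ne_of_gt (lt_trans (by positivity) hs)
        have ha : ContinuousAt (fun s : ℝ => s ^ (α - 1)) s :=
          Real.continuousAt_rpow_const _ _ (Or.inl hs0)
        have hb : ContinuousAt (fun s : ℝ => ml α α (-lam i * s ^ α)) s :=
          ((tr_ml_cont hα hα1).comp
            (continuous_const.mul (Real.continuous_rpow_const hα.le))).continuousAt
        exact ((((continuousAt_const.mul ha).mul hb).mul continuousAt_const).neg).continuousWithinAt
      · intro i s hs
        exact tr_term_bound hα hα1 _ _ (hlam i) (by positivity) (le_of_lt hs)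
    exact (h1.continuousAt (Ioi_mem_nhds (by linarith))).continuousWithinAt
  · rw [(hder x hx t ht.1).deriv, tsum_neg]
  · intro ε hε _
    have h1 : TendstoUniformlyOn
        (fun N (z : ℝ × ℝ) => ∑ i ∈ Finset.range N, ε⁻¹ * v i z.1)
        (fun z => ε⁻¹ * ((∑' i, M * (lam i ^ 2 * c i ^ 2)) + g z.1)) atTop
        (Icc 0 l ×ˢ Icc ε T) := by
      have h2 := (hvu.comp (Prod.fst : ℝ × ℝ → ℝ)).mono
        (show Icc (0:ℝ) l ×ˢ Icc ε T ⊆ Prod.fst ⁻¹' Icc 0 l from fun z hz => hz.1)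
      have h3 := (uniformContinuous_const_smul (ε⁻¹ : ℝ) (X := ℝ)).comp_tendstoUniformlyOn h2
      refine h3.congr (Eventually.of_forall fun N z _ => ?_)
      simp [Finset.mul_sum]
    have h2 := (tr_unif (F := fun i (z : ℝ × ℝ) =>
      -(c i * lam i * z.2 ^ (α - 1) * ml α α (-lam i * z.2 ^ α) * X i z.1)) h1 ?_).2
    · refine h2.congr_right fun z _ => ?_
      exact tsum_neg
    · intro i z hz
      refine (tr_term_bound hα hα1 _ _ (hlam i) hε hz.2.1).trans ?_
      have := hcX i z.1
      gcongr
end
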